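/- For every positive integer k, the level set L_k = {n ∈ ℕ : ω*(n) = k} has a natural density δ_k, i.e., #(L_k ∩ [1,x])/x converges as x → ∞, and this density δ_k is strictly positive. -/

import Mathlib

open Filter Real

/-- `ω*(n)`: the number of divisors `d` of `n` such that `d + 1` is prime. -/
def omegaStar (n : ℕ) : ℕ := (n.divisors.filter (fun d => Nat.Prime (d + 1))).card

/-!
A typical integer has about `log log z` prime factors below `z`, whereas a typical multiple of some
`p - 1 ∈ (z, z ^ 2]` has about twice as many; as Erdős and Wagstaff showed, this forces the integers
with a divisor `p - 1 > y` to have upper density tending to `0` as `y → ∞`. Hence the level sets of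
`ω*` are approximated in density by periodic sets, and so have densities. Moreover, if `ω* n = k`,
then the `m` for which `n * m` has no divisor `p - 1` other than those of `n` have positive density,
because forbidding one more divisor `d > 1` removes at most the fraction `1 / d` of the density
(Heilbronn–Rohrbach); so `L_k` has positive density as soon as it is nonempty.

For nonemptiness, let `n` be even. It suffices to find a prime `n * m + 1` with `m > 1` such that no
divisor `v ≠ 1` of `m` is a *double gain*, meaning that `g * v + 1` is prime for two distinct
divisors `g` of `n`: then, for the least `v ∣ m` such that `n * v` has a divisor `p - 1` not
dividing `n`, every such divisor has the form `g * v` with `g ∣ n`, whence `ω* (n * v) = ω* n + 1`.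
By a sieve bound the sum of `1 / φ v` over double gains converges. Taking `n * m + 1` in a residue
class that forces `m` to have no small prime factor makes the double gains dividing `m` rarer than
the primes in that class.
-/

section PrimeReciprocals

open Finset

/-- Mertens' sum `∑_{p ≤ n} 1 / p` over primes. -/
noncomputable def primeRecipSum (n : ℕ) : ℝ := ∑ p ∈ n.primesLE, (p : ℝ)⁻¹

lemma prime_pow_div_dvd_factorial {p : ℕ} (hp : p.Prime) (n : ℕ) :
    p ^ (n / p) ∣ n.factorial := by
  have hlog : Nat.log p n < Nat.log p n + 2 := Nat.lt_add_of_pos_right two_pos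
  refine (hp.pow_dvd_factorial_iff hlog).2 ?_
  have h1 : (1 : ℕ) ∈ Ico 1 (Nat.log p n + 2) := by simp
  simpa using single_le_sum (f := fun i => n / p ^ i) (fun _ _ => Nat.zero_le _) h1

lemma prod_primesLE_pow_div_le_factorial (n : ℕ) :
    ∏ p ∈ n.primesLE, p ^ (n / p) ≤ n.factorial := by
  refine Nat.le_of_dvd n.factorial_pos (prod_dvd_of_isRelPrime (fun p hp q hq hpq => ?_)
    fun p hp => prime_pow_div_dvd_factorial (Nat.prime_of_mem_primesLE hp) n)
  exact Nat.coprime_iff_isRelPrime.1 <| Nat.Coprime.pow _ _ <|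
    (Nat.coprime_primes (Nat.prime_of_mem_primesLE hp) (Nat.prime_of_mem_primesLE hq)).2 hpq

lemma sum_primesLE_div_mul_log_le (n : ℕ) :
    ∑ p ∈ n.primesLE, ((n / p : ℕ) : ℝ) * log p ≤ n * log n := by
  have hpos : ∀ p ∈ n.primesLE, 0 < p := fun p hp => (Nat.prime_of_mem_primesLE hp).pos
  calc ∑ p ∈ n.primesLE, ((n / p : ℕ) : ℝ) * log p
      = log (∏ p ∈ n.primesLE, p ^ (n / p) : ℕ) := by
        rw [Nat.cast_prod, log_prod fun p hp => by have := hpos p hp; positivity]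
        simp [log_pow]
    _ ≤ log ((n ^ n : ℕ) : ℝ) := by
        refine log_le_log (by exact_mod_cast prod_pos fun p hp => pow_pos (hpos p hp) _) ?_
        exact_mod_cast (prod_primesLE_pow_div_le_factorial n).trans n.factorial_le_pow
    _ = n * log n := by simp [log_pow]

lemma sum_primesLE_log_div_le (n : ℕ) : ∑ p ∈ n.primesLE, log p / p ≤ log n + log 4 := by
  rcases n.eq_zero_or_pos with rfl | hn
  · simpa using log_nonneg (by norm_num : (1 : ℝ) ≤ 4)
  have htheta : ∑ p ∈ n.primesLE, log p ≤ log 4 * n := by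
    simpa [Chebyshev.theta_eq_sum_primesLE_log] using
      Chebyshev.theta_le_log4_mul_x (x := (n : ℝ)) n.cast_nonneg
  refine le_of_mul_le_mul_left ?_ (Nat.cast_pos.2 hn : (0 : ℝ) < n)
  calc (n : ℝ) * ∑ p ∈ n.primesLE, log p / p = ∑ p ∈ n.primesLE, (n / p : ℝ) * log p := by
        rw [mul_sum]; exact sum_congr rfl fun _ _ => by ring
    _ ≤ ∑ p ∈ n.primesLE, (((n / p : ℕ) : ℝ) * log p + log p) := by
        refine sum_le_sum fun p _ => ?_
        have hfloor : (n / p : ℝ) ≤ (n / p : ℕ) + 1 := by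
          rw [← Nat.floor_div_eq_div (K := ℝ)]; exact (Nat.lt_floor_add_one _).le
        nlinarith [log_natCast_nonneg p]
    _ ≤ n * (log n + log 4) := by
        rw [sum_add_distrib]; linarith [sum_primesLE_div_mul_log_le n]

lemma sum_inv_le_of_lt_pow {P : Finset ℕ} {w k : ℕ} (hw : 1 ≤ w)
    (hP : ∀ p ∈ P, p.Prime ∧ w < p ∧ p < (w + 1) ^ k) : ∑ p ∈ P, (p : ℝ)⁻¹ ≤ k + 2 := by
  have hw' : (2 : ℝ) ≤ (w + 1 : ℕ) := by exact_mod_cast Nat.succ_le_succ hw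
  have hlog2 : log 2 ≤ log (w + 1 : ℕ) := log_le_log two_pos hw'
  have hlog : 0 < log (w + 1 : ℕ) := (log_pos one_lt_two).trans_le hlog2
  have hlog4 : log 4 = 2 * log 2 := by
    rw [show (4 : ℝ) = 2 ^ 2 by norm_num, log_pow, Nat.cast_ofNat]
  refine le_of_mul_le_mul_left ?_ hlog
  calc log (w + 1 : ℕ) * ∑ p ∈ P, (p : ℝ)⁻¹ ≤ ∑ p ∈ P, log p / p := by
        rw [mul_sum]
        refine sum_le_sum fun p hp => mul_le_mul_of_nonneg_right ?_ (by positivity)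
        exact log_le_log (by positivity) (by exact_mod_cast (hP p hp).2.1)
    _ ≤ ∑ p ∈ ((w + 1) ^ k).primesLE, log p / p := by
        refine sum_le_sum_of_subset_of_nonneg (fun p hp => ?_) fun p _ _ =>
          div_nonneg (log_natCast_nonneg p) p.cast_nonneg
        exact Nat.mem_primesLE.2 ⟨(hP p hp).2.2.le, (hP p hp).1⟩
    _ ≤ k * log (w + 1 : ℕ) + log 4 := by
        simpa [log_pow] using sum_primesLE_log_div_le ((w + 1) ^ k)
    _ ≤ log (w + 1 : ℕ) * (k + 2) := by linarith

lemma sum_primesLE_inv_mul_pred_le (n : ℕ) :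
    ∑ p ∈ n.primesLE, ((p : ℝ) * (p - 1))⁻¹ ≤ 1 := by
  have htel : ∀ m : ℕ, ∑ i ∈ range m, (((i + 2 : ℕ) : ℝ) * ((i + 2 : ℕ) - 1))⁻¹
      = 1 - ((m + 1 : ℕ) : ℝ)⁻¹ := fun m => by
    induction m with
    | zero => simp
    | succ m ih =>
      have : (m : ℝ) + 2 - 1 = m + 1 := by ring
      rw [sum_range_succ, ih]; push_cast; rw [this, add_assoc, one_add_one_eq_two]; field_simp; ring
  calc ∑ p ∈ n.primesLE, ((p : ℝ) * (p - 1))⁻¹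
      ≤ ∑ p ∈ Ico 2 (n + 2), ((p : ℝ) * (p - 1))⁻¹ := by
        refine sum_le_sum_of_subset_of_nonneg (fun p hp => ?_) fun p hp _ => ?_
        · have hp1 := Nat.one_lt_of_mem_primesLE hp
          have hpn := Nat.le_of_mem_primesLE hp
          exact mem_Ico.2 ⟨hp1, by omega⟩
        · have : (2 : ℝ) ≤ p := by exact_mod_cast (mem_Ico.1 hp).1
          exact inv_nonneg.2 (mul_nonneg p.cast_nonneg (by linarith))
    _ = 1 - ((n + 1 : ℕ) : ℝ)⁻¹ := by
        rw [sum_Ico_eq_sum_range, ← htel]; simp only [add_comm 2, Nat.add_sub_cancel]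
    _ ≤ 1 := sub_le_self _ (by positivity)

lemma sum_primesLE_inv_pred_le (n : ℕ) :
    ∑ p ∈ n.primesLE, ((p : ℝ) - 1)⁻¹ ≤ primeRecipSum n + 1 := by
  rw [primeRecipSum]
  refine le_trans (le_of_eq ?_) (add_le_add_right (sum_primesLE_inv_mul_pred_le n) _)
  rw [← sum_add_distrib]
  refine sum_congr rfl fun p hp => ?_
  have hp1 : (1 : ℝ) < p := by exact_mod_cast Nat.one_lt_of_mem_primesLE hp
  have : (p : ℝ) - 1 ≠ 0 := by linarith
  field_simp
  ring

lemma sum_Ico_le_prod_primesBelow_tsum {f : ℕ → ℝ} (hf : ∀ n, 0 ≤ f n) (hf₁ : f 1 = 1)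
    (hmul : ∀ {m n}, Nat.Coprime m n → f (m * n) = f m * f n)
    (hsum : ∀ {p}, p.Prime → Summable fun k => f (p ^ k)) (N : ℕ) :
    ∑ m ∈ Ico 1 N, f m ≤ ∏ p ∈ N.primesBelow, ∑' k, f (p ^ k) := by
  have h := (EulerProduct.summable_and_hasSum_smoothNumbers_prod_primesBelow_tsum hf₁ hmul
    (fun hp => by simpa only [norm_of_nonneg (hf _)] using hsum hp) N).2
  classical
  calc ∑ m ∈ Ico 1 N, f m = ∑ m ∈ (Ico 1 N).subtype (· ∈ N.smoothNumbers), f m := by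
        rw [sum_subtype_of_mem f fun m hm => Nat.mem_smoothNumbers_of_lt (mem_Ico.1 hm).1
          (mem_Ico.1 hm).2]
    _ ≤ _ := sum_le_hasSum _ (fun m _ => hf m) h

lemma log_le_exp_primeRecipSum (n : ℕ) : log n ≤ exp (primeRecipSum n + 1) := by
  have hlt : ∀ {p : ℕ}, p.Prime → (p : ℝ)⁻¹ < 1 := fun hp =>
    inv_lt_one_of_one_lt₀ (by exact_mod_cast hp.one_lt)
  have hgeom : ∀ {p : ℕ}, p.Prime → HasSum (fun k => (((p ^ k : ℕ) : ℝ))⁻¹) (1 - (p : ℝ)⁻¹)⁻¹ :=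
    fun hp => by simpa [inv_pow] using hasSum_geometric_of_lt_one (by positivity) (hlt hp)
  have heuler := sum_Ico_le_prod_primesBelow_tsum (f := fun m => (m : ℝ)⁻¹)
    (fun _ => by positivity) (by simp) (fun _ => by push_cast; rw [mul_inv])
    (fun hp => (hgeom hp).summable) (n + 1)
  have hharm : log (n + 1 : ℕ) ≤ ∑ m ∈ Ico 1 (n + 1), (m : ℝ)⁻¹ := by
    refine (log_add_one_le_harmonic n).trans (le_of_eq ?_)
    rw [harmonic_eq_sum_Icc]; push_cast; rfl
  calc log n ≤ log (n + 1 : ℕ) := by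
        rcases n.eq_zero_or_pos with rfl | hn
        · simp
        · exact log_le_log (by exact_mod_cast hn) (by exact_mod_cast n.le_succ)
    _ ≤ ∏ p ∈ n.primesLE, ∑' k, (((p ^ k : ℕ) : ℝ))⁻¹ := hharm.trans heuler
    _ ≤ ∏ p ∈ n.primesLE, exp ((p : ℝ) - 1)⁻¹ := by
        refine prod_le_prod (fun p _ => tsum_nonneg fun _ => by positivity) fun p hp => ?_
        rw [(hgeom (Nat.prime_of_mem_primesLE hp)).tsum_eq]
        have hp1 : (1 : ℝ) < p := by exact_mod_cast Nat.one_lt_of_mem_primesLE hp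
        refine le_trans (le_of_eq ?_) (add_one_le_exp _)
        have : (p : ℝ) - 1 ≠ 0 := by linarith
        field_simp
        ring
    _ = exp (∑ p ∈ n.primesLE, ((p : ℝ) - 1)⁻¹) := (exp_sum _ _).symm
    _ ≤ exp (primeRecipSum n + 1) := exp_le_exp.2 (sum_primesLE_inv_pred_le n)

end PrimeReciprocals

section Bonferroni

open Finset

variable {ι : Type*}

/-- The inclusion–exclusion expansion of `∏ q ∈ P, (1 - v q)`, truncated to the terms with at most
`m` factors. -/
def bonferroniSum (v : ι → ℝ) (P : Finset ι) (m : ℕ) : ℝ :=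
  ∑ S ∈ P.powerset with #S ≤ m, ∏ q ∈ S, -v q

lemma bonferroniSum_empty (v : ι → ℝ) (m : ℕ) : bonferroniSum v ∅ m = 1 := by
  simp [bonferroniSum, filter_singleton]

lemma bonferroniSum_zero (v : ι → ℝ) (P : Finset ι) : bonferroniSum v P 0 = 1 := by
  have : {S ∈ P.powerset | #S ≤ 0} = {∅} := by ext S; simp +contextual [iff_def]
  rw [bonferroniSum, this, sum_singleton, prod_empty]

lemma bonferroniSum_insert [DecidableEq ι] (v : ι → ℝ) {P : Finset ι} {q : ι} (hq : q ∉ P) (m : ℕ) :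
    bonferroniSum v (insert q P) (m + 1) =
      bonferroniSum v P (m + 1) - v q * bonferroniSum v P m := by
  have hmem : ∀ {S}, S ∈ P.powerset → q ∉ S := fun hS h => hq (mem_powerset.1 hS h)
  simp only [bonferroniSum, sum_filter, sum_powerset_insert hq, mul_sum, sub_eq_add_neg,
    ← sum_neg_distrib]
  congr 1
  refine sum_congr rfl fun S hS => ?_
  rw [card_insert_of_notMem (hmem hS), prod_insert (hmem hS)]
  simp only [add_le_add_iff_right, mul_ite, mul_zero, neg_mul]
  split_ifs <;> simp

/-- The upper bound is Rankin's trick: discarded subsets `S` have `1 ≤ 2 ^ (#S - (m + 1))`. -/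
lemma bonferroniSum_sub_prod_bounds {v : ι → ℝ} {P : Finset ι} (hv : ∀ q ∈ P, v q ∈ Set.Icc 0 1)
    (m : ℕ) :
    (-1) ^ m * (bonferroniSum v P m - ∏ q ∈ P, (1 - v q)) ∈
      Set.Icc 0 ((1 / 2) ^ (m + 1) * ∏ q ∈ P, (1 + 2 * v q)) := by
  classical
  induction P using Finset.induction_on generalizing m with
  | empty => simp [bonferroniSum_empty]
  | insert q P hq ih =>
    have hq0 : 0 ≤ v q := (hv q (mem_insert_self _ _)).1
    have hP : ∀ p ∈ P, v p ∈ Set.Icc 0 1 := fun p hp => hv p (mem_insert_of_mem hp)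
    have ih := ih hP
    rw [prod_insert hq, prod_insert hq]
    cases m with
    | zero =>
      have h0 : 0 ≤ ∏ p ∈ P, (1 - v p) := prod_nonneg fun p hp => sub_nonneg.2 (hP p hp).2
      have h1 : ∏ p ∈ P, (1 - v p) ≤ 1 := prod_le_one (fun p hp => sub_nonneg.2 (hP p hp).2)
        fun p hp => sub_le_self _ (hP p hp).1
      have h2 : 1 ≤ ∏ p ∈ P, (1 + 2 * v p) :=
        Finset.one_le_prod fun p hp => by linarith [(hP p hp).1]
      obtain ⟨hl, hu⟩ := ih 0
      simp only [bonferroniSum_zero, pow_zero, one_mul, zero_add, pow_one] at hl hu ⊢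
      constructor <;> nlinarith
    | succ m =>
      obtain ⟨hl, hu⟩ := ih m
      obtain ⟨hl', hu'⟩ := ih (m + 1)
      have hsplit : (-1) ^ (m + 1) * (bonferroniSum v (insert q P) (m + 1) -
          (1 - v q) * ∏ p ∈ P, (1 - v p)) =
          (-1) ^ (m + 1) * (bonferroniSum v P (m + 1) - ∏ p ∈ P, (1 - v p)) +
          v q * ((-1) ^ m * (bonferroniSum v P m - ∏ p ∈ P, (1 - v p))) := by
        rw [bonferroniSum_insert v hq]; ring
      rw [hsplit]
      refine ⟨add_nonneg hl' (mul_nonneg hq0 hl), ?_⟩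
      calc _ ≤ (1 / 2) ^ (m + 1 + 1) * ∏ p ∈ P, (1 + 2 * v p) +
            v q * ((1 / 2) ^ (m + 1) * ∏ p ∈ P, (1 + 2 * v p)) := by gcongr
        _ = _ := by ring

end Bonferroni

section UpperSieve

open Finset

/-- `F` indexes a truncation of the inclusion–exclusion expansion of `∏ q ∈ P, (1 - v q)` which is
an upper bound of it, whose index sets have products at most `D`, and which loses at most a factor
`K` in comparison with `exp (-∑ q ∈ P, v q)` for densities `v q ≤ κ / q`. -/
structure UpperSieve (κ : ℝ) (P : Finset ℕ) (F : Finset (Finset ℕ)) (D : ℕ) (K : ℝ) : Prop where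
  subset : ∀ S ∈ F, S ⊆ P
  level : ∀ S ∈ F, ∏ q ∈ S, q ≤ D
  prod_le : ∀ v : ℕ → ℝ, (∀ q ∈ P, v q ∈ Set.Icc 0 1) →
    ∏ q ∈ P, (1 - v q) ≤ ∑ S ∈ F, ∏ q ∈ S, -v q
  sum_le : ∀ v : ℕ → ℝ, (∀ q ∈ P, v q ∈ Set.Icc 0 1) → (∀ q ∈ P, v q ≤ κ / q) →
    ∑ S ∈ F, ∏ q ∈ S, -v q ≤ K * exp (-∑ q ∈ P, v q)

namespace UpperSieve

variable {κ : ℝ} {P P₁ P₂ : Finset ℕ} {F F₁ F₂ : Finset (Finset ℕ)} {D D' D₁ D₂ : ℕ}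
  {K K' K₁ K₂ : ℝ}

lemma empty : UpperSieve κ ∅ {∅} 1 1 := ⟨by simp, by simp, by simp, by simp⟩

lemma mono (h : UpperSieve κ P F D K) (hD : D ≤ D') (hK : K ≤ K') : UpperSieve κ P F D' K' where
  subset := h.subset
  level S hS := (h.level S hS).trans hD
  prod_le := h.prod_le
  sum_le v hv hκ := (h.sum_le v hv hκ).trans (by gcongr)

lemma sum_prod_neg_nonneg (h : UpperSieve κ P F D K) {v : ℕ → ℝ} (hv : ∀ q ∈ P, v q ∈ Set.Icc 0 1) :
    0 ≤ ∑ S ∈ F, ∏ q ∈ S, -v q :=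
  (prod_nonneg fun q hq => sub_nonneg.2 (hv q hq).2).trans (h.prod_le v hv)

lemma sum_image_union (h₁ : ∀ S ∈ F₁, S ⊆ P₁) (h₂ : ∀ S ∈ F₂, S ⊆ P₂) (hd : Disjoint P₁ P₂)
    (v : ℕ → ℝ) :
    ∑ S ∈ (F₁ ×ˢ F₂).image (fun x => x.1 ∪ x.2), ∏ q ∈ S, v q =
      (∑ S ∈ F₁, ∏ q ∈ S, v q) * ∑ S ∈ F₂, ∏ q ∈ S, v q := by
  have hinter : ∀ S ∈ F₁, ∀ T ∈ F₂, (S ∪ T) ∩ P₁ = S ∧ (S ∪ T) ∩ P₂ = T := fun S hS T hT => by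
    have hS' := hd.mono_left (h₁ S hS)
    have hT' := hd.symm.mono_left (h₂ T hT)
    rw [union_inter_distrib_right, union_inter_distrib_right, inter_eq_left.2 (h₁ S hS),
      inter_eq_left.2 (h₂ T hT), disjoint_iff_inter_eq_empty.1 hS',
      disjoint_iff_inter_eq_empty.1 hT', union_empty, empty_union]
    exact ⟨rfl, rfl⟩
  rw [sum_image, sum_mul_sum, sum_product]
  · exact sum_congr rfl fun S hS => sum_congr rfl fun T hT =>
      prod_union (hd.mono (h₁ S hS) (h₂ T hT))
  · rintro ⟨S, T⟩ hST ⟨S', T'⟩ hST' h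
    simp only [coe_product, Set.mem_prod, mem_coe] at hST hST' h
    obtain ⟨hS, hT⟩ := hinter S hST.1 T hST.2
    obtain ⟨hS', hT'⟩ := hinter S' hST'.1 T' hST'.2
    exact Prod.ext (hS.symm.trans (h ▸ hS')) (hT.symm.trans (h ▸ hT'))

lemma union (h₁ : UpperSieve κ P₁ F₁ D₁ K₁) (h₂ : UpperSieve κ P₂ F₂ D₂ K₂)
    (hd : Disjoint P₁ P₂) :
    UpperSieve κ (P₁ ∪ P₂) ((F₁ ×ˢ F₂).image fun x => x.1 ∪ x.2) (D₁ * D₂) (K₁ * K₂) where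
  subset S hS := by
    obtain ⟨⟨A, B⟩, hAB, rfl⟩ := mem_image.1 hS
    exact union_subset_union (h₁.subset A (mem_product.1 hAB).1) (h₂.subset B (mem_product.1 hAB).2)
  level S hS := by
    obtain ⟨⟨A, B⟩, hAB, rfl⟩ := mem_image.1 hS
    obtain ⟨hA, hB⟩ := mem_product.1 hAB
    rw [prod_union (hd.mono (h₁.subset A hA) (h₂.subset B hB))]
    exact Nat.mul_le_mul (h₁.level A hA) (h₂.level B hB)
  prod_le v hv := by
    obtain ⟨hv₁, hv₂⟩ := forall_mem_union.1 hv
    rw [sum_image_union h₁.subset h₂.subset hd, prod_union hd]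
    exact mul_le_mul (h₁.prod_le v hv₁) (h₂.prod_le v hv₂)
      (prod_nonneg fun q hq => sub_nonneg.2 (hv₂ q hq).2) (h₁.sum_prod_neg_nonneg hv₁)
  sum_le v hv hκ := by
    obtain ⟨hv₁, hv₂⟩ := forall_mem_union.1 hv
    obtain ⟨hκ₁, hκ₂⟩ := forall_mem_union.1 hκ
    rw [sum_image_union h₁.subset h₂.subset hd, sum_union hd, neg_add, exp_add]
    calc _ ≤ (K₁ * exp (-∑ q ∈ P₁, v q)) * (K₂ * exp (-∑ q ∈ P₂, v q)) :=
          mul_le_mul (h₁.sum_le v hv₁ hκ₁) (h₂.sum_le v hv₂ hκ₂) (h₂.sum_prod_neg_nonneg hv₂)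
            ((h₁.sum_prod_neg_nonneg hv₁).trans (h₁.sum_le v hv₁ hκ₁))
      _ = _ := by ring

lemma block {B : ℝ} {y : ℕ} (r : ℕ) (hB : ∑ q ∈ P, κ / (q : ℝ) ≤ B) (hy : ∀ q ∈ P, q ≤ y)
    (hy1 : 1 ≤ y) :
    UpperSieve κ P {S ∈ P.powerset | #S ≤ 2 * r} (y ^ (2 * r))
      (1 + exp (3 * B) * (1 / 2) ^ (2 * r + 1)) where
  subset S hS := mem_powerset.1 (mem_filter.1 hS).1
  level S hS := by
    obtain ⟨hSP, hcard⟩ := mem_filter.1 hS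
    calc ∏ q ∈ S, q ≤ y ^ #S := prod_le_pow_card _ _ _ fun q hq => hy q (mem_powerset.1 hSP hq)
      _ ≤ y ^ (2 * r) := Nat.pow_le_pow_right hy1 hcard
  prod_le v hv := by
    simpa [bonferroniSum] using (bonferroniSum_sub_prod_bounds hv (2 * r)).1
  sum_le v hv hκ := by
    set s := ∑ q ∈ P, v q with hs
    have hsB : s ≤ B := (sum_le_sum hκ).trans hB
    have hprod : ∏ q ∈ P, (1 - v q) ≤ exp (-s) := by
      rw [hs, ← sum_neg_distrib, exp_sum]
      exact prod_le_prod (fun q hq => sub_nonneg.2 (hv q hq).2) fun q _ => one_sub_le_exp_neg _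
    have hprod' : ∏ q ∈ P, (1 + 2 * v q) ≤ exp (3 * B) * exp (-s) := by
      calc ∏ q ∈ P, (1 + 2 * v q) ≤ ∏ q ∈ P, exp (2 * v q) := by
            refine prod_le_prod (fun q hq => by linarith [(hv q hq).1]) fun q _ => ?_
            linarith [add_one_le_exp (2 * v q)]
        _ = exp (2 * s) := by rw [hs, mul_sum, exp_sum]
        _ ≤ exp (3 * B) * exp (-s) := by rw [← exp_add]; exact exp_le_exp.2 (by linarith)
    have herr : bonferroniSum v P (2 * r) - ∏ q ∈ P, (1 - v q) ≤
        (1 / 2) ^ (2 * r + 1) * ∏ q ∈ P, (1 + 2 * v q) := by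
      simpa using (bonferroniSum_sub_prod_bounds hv (2 * r)).2
    have herr' := herr.trans (mul_le_mul_of_nonneg_left hprod' (by positivity))
    change bonferroniSum v P (2 * r) ≤ _
    linarith

/-- Brun–Hooley: peel off the block of primes in `(√z, z]` and iterate, raising the truncation
level at each step so that the losses form a convergent product. -/
lemma exists_of_subset_primesLE (hκ : 0 ≤ κ) (s : ℕ) {z : ℕ} (hz : 1 ≤ z) (hP : P ⊆ z.primesLE) :
    ∃ F, UpperSieve κ P F (z ^ (4 * s + 4)) (exp (exp (12 * κ) * (1 / 2) ^ (2 * s))) := by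
  induction z using Nat.strong_induction_on generalizing s P with | h z ih => ?_
  obtain rfl | hz2 := hz.eq_or_lt
  · obtain rfl : P = ∅ := subset_empty.1 hP
    exact ⟨_, empty.mono (by simp) (one_le_exp (by positivity))⟩
  · set w := Nat.sqrt z
    have hw1 : 1 ≤ w := Nat.sqrt_pos.2 (by omega)
    obtain ⟨F₁, h₁⟩ := ih w (Nat.sqrt_lt_self hz2) (P := {q ∈ P | q ≤ w}) (s + 1) hw1 fun q hq =>
      Nat.mem_primesLE.2 ⟨(mem_filter.1 hq).2, Nat.prime_of_mem_primesLE (hP (mem_filter.1 hq).1)⟩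
    have hblock : ∑ q ∈ P with ¬ q ≤ w, κ / (q : ℝ) ≤ 4 * κ := by
      have h := sum_inv_le_of_lt_pow (P := {q ∈ P | ¬ q ≤ w}) (k := 2) hw1 fun q hq => by
        obtain ⟨hqP, hqw⟩ := mem_filter.1 hq
        obtain ⟨hqz, hq⟩ := Nat.mem_primesLE.1 (hP hqP)
        exact ⟨hq, not_le.1 hqw, hqz.trans_lt (Nat.lt_succ_sqrt' z)⟩
      calc ∑ q ∈ P with ¬ q ≤ w, κ / (q : ℝ) = κ * ∑ q ∈ P with ¬ q ≤ w, (q : ℝ)⁻¹ := by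
            simp only [mul_sum, div_eq_mul_inv]
        _ ≤ κ * ((2 : ℕ) + 2) := mul_le_mul_of_nonneg_left h hκ
        _ = 4 * κ := by push_cast; ring
    have h₂ := block s hblock (fun q hq => Nat.le_of_mem_primesLE (hP (mem_filter.1 hq).1)) hz
    have h := h₁.union h₂ (disjoint_filter_filter_not _ _ _)
    rw [filter_union_filter_not_eq] at h
    refine ⟨_, h.mono ?_ ?_⟩
    · calc w ^ (4 * (s + 1) + 4) * z ^ (2 * s) = (w ^ 2) ^ (2 * s + 4) * z ^ (2 * s) := by ring
        _ ≤ z ^ (2 * s + 4) * z ^ (2 * s) := by gcongr; exact Nat.sqrt_le' z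
        _ = z ^ (4 * s + 4) := by ring
    · set E := exp (12 * κ) * (1 / 2) ^ (2 * s) with hE
      have hE0 : 0 < E := by positivity
      have e₁ : exp (12 * κ) * (1 / 2) ^ (2 * (s + 1)) = E / 4 := by rw [hE]; ring
      have e₂ : exp (3 * (4 * κ)) * (1 / 2) ^ (2 * s + 1) = E / 2 := by rw [hE]; ring_nf
      rw [e₁, e₂]
      calc exp (E / 4) * (1 + E / 2) ≤ exp (E / 4) * exp (E / 2) := by
            gcongr; linarith [add_one_le_exp (E / 2)]
        _ ≤ exp E := by rw [← exp_add]; exact exp_le_exp.2 (by linarith)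

end UpperSieve

end UpperSieve

section PeriodicSums

open Finset

lemma sum_range_mul_of_coprime {R : Type*} [CommSemiring R] {a b : ℕ} (hab : a.Coprime b)
    (ha : a ≠ 0) (hb : b ≠ 0) {f g : ℕ → R} (hf : Function.Periodic f a)
    (hg : Function.Periodic g b) :
    ∑ n ∈ range (a * b), f n * g n = (∑ n ∈ range a, f n) * ∑ n ∈ range b, g n := by
  rw [sum_mul_sum, ← sum_product']
  refine sum_nbij' (fun n => (n % a, n % b)) (fun x => Nat.chineseRemainder hab x.1 x.2)
    (fun n _ => ?_) (fun x _ => ?_) (fun n hn => ?_) (fun x hx => ?_) (fun n _ => ?_)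
  · simp [Nat.mod_lt _ ha.bot_lt, Nat.mod_lt _ hb.bot_lt]
  · exact mem_range.2 (Nat.chineseRemainder_lt_mul hab _ _ ha hb)
  · refine Nat.ModEq.eq_of_lt_of_lt ?_ (Nat.chineseRemainder_lt_mul hab _ _ ha hb) (mem_range.1 hn)
    obtain ⟨h₁, h₂⟩ := (Nat.chineseRemainder hab (n % a) (n % b)).2
    exact (Nat.modEq_and_modEq_iff_modEq_mul hab).1
      ⟨h₁.trans (Nat.mod_modEq _ _), h₂.trans (Nat.mod_modEq _ _)⟩
  · obtain ⟨h₁, h₂⟩ := (Nat.chineseRemainder hab x.1 x.2).2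
    simp only [mem_product, mem_range] at hx
    exact Prod.ext (Eq.trans h₁ (Nat.mod_eq_of_lt hx.1)) (Eq.trans h₂ (Nat.mod_eq_of_lt hx.2))
  · simp [hf.map_mod_nat, hg.map_mod_nat]

lemma periodic_prod {R : Type*} [CommSemiring R] {u : ℕ → ℕ → R}
    (hu : ∀ q, Function.Periodic (u q) q) (S : Finset ℕ) :
    Function.Periodic (fun n => ∏ q ∈ S, u q n) (∏ q ∈ S, q) := fun n =>
  prod_congr rfl fun q hq => by
    obtain ⟨k, hk⟩ := dvd_prod_of_mem (fun q => q) hq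
    rw [hk, mul_comm]
    exact (hu q).nat_mul k n

lemma sum_range_prod_primes {R : Type*} [CommSemiring R] {u : ℕ → ℕ → R}
    (hu : ∀ q, Function.Periodic (u q) q) {S : Finset ℕ} (hS : ∀ q ∈ S, q.Prime) :
    ∑ n ∈ range (∏ q ∈ S, q), ∏ q ∈ S, u q n = ∏ q ∈ S, ∑ a ∈ range q, u q a := by
  induction S using Finset.induction_on with
  | empty => simp
  | insert q S hq ih =>
    obtain ⟨hqp, hSp⟩ := forall_mem_insert .. |>.1 hS
    have hcop : q.Coprime (∏ p ∈ S, p) := Nat.Coprime.prod_right fun p hp =>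
      (Nat.coprime_primes hqp (hSp p hp)).2 fun h => hq (h ▸ hp)
    rw [prod_insert hq, prod_insert hq, ← ih hSp, ← sum_range_mul_of_coprime hcop hqp.ne_zero
      (prod_ne_zero_iff.2 fun p hp => (hSp p hp).ne_zero) (hu q) (periodic_prod hu S)]
    simp only [prod_insert hq]

lemma sum_range_mul_add_of_periodic {R : Type*} [Semiring R] {f : ℕ → R} {d : ℕ}
    (hf : Function.Periodic f d) (k r : ℕ) :
    ∑ n ∈ range (d * k + r), f n = k * ∑ n ∈ range d, f n + ∑ n ∈ range r, f n := by
  have hshift : ∀ k x, f (d * k + x) = f x := fun k x => by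
    rw [add_comm, mul_comm]; exact hf.nat_mul k x
  have hmul : ∑ n ∈ range (d * k), f n = k * ∑ n ∈ range d, f n := by
    induction k with
    | zero => simp
    | succ k ih =>
      rw [mul_add_one, sum_range_add, ih]
      simp only [hshift, Nat.cast_succ, add_one_mul]
  rw [sum_range_add, hmul]
  simp only [hshift]

lemma abs_sum_range_sub_le_of_periodic {f : ℕ → ℝ} {d : ℕ} (hd : 0 < d)
    (hf : Function.Periodic f d) (h0 : ∀ n, 0 ≤ f n) (N : ℕ) :
    |∑ n ∈ range N, f n - N * ((∑ n ∈ range d, f n) / d)| ≤ ∑ n ∈ range d, f n := by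
  set M := ∑ n ∈ range d, f n
  have hrd := Nat.mod_lt N hd
  have hd0 : (0 : ℝ) < d := by exact_mod_cast hd
  have hM : 0 ≤ M := sum_nonneg fun n _ => h0 n
  have hsum : ∑ n ∈ range N, f n = (N / d : ℕ) * M + ∑ n ∈ range (N % d), f n := by
    rw [← sum_range_mul_add_of_periodic hf, Nat.div_add_mod]
  have hmain : (N : ℝ) * (M / d) = (N / d : ℕ) * M + (N % d : ℕ) / d * M := by
    have : (N : ℝ) = d * (N / d : ℕ) + (N % d : ℕ) := by exact_mod_cast (Nat.div_add_mod N d).symm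
    rw [this]; field_simp
  have hfrac : ((N % d : ℕ) : ℝ) / d ≤ 1 := (div_le_one hd0).2 (by exact_mod_cast hrd.le)
  have hrem : ∑ n ∈ range (N % d), f n ≤ M :=
    sum_le_sum_of_subset_of_nonneg (range_mono hrd.le) fun n _ _ => h0 n
  have hrem0 : 0 ≤ ∑ n ∈ range (N % d), f n := sum_nonneg fun n _ => h0 n
  have hfrac0 : 0 ≤ ((N % d : ℕ) : ℝ) / d * M := by positivity
  rw [hsum, hmain, abs_le]
  constructor <;> linarith [mul_le_of_le_one_left hM hfrac]

end PeriodicSums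

section Sieve

open Finset

lemma UpperSieve.card_le {κ K : ℝ} {P : Finset ℕ} {F : Finset (Finset ℕ)} {D : ℕ}
    (h : UpperSieve κ P F D K) (hP : ∀ q ∈ P, q.Prime) : #F ≤ D := by
  have hF : ∀ S ∈ F, ∀ q ∈ S, q.Prime := fun S hS q hq => hP q (h.subset S hS hq)
  calc #F ≤ #(Icc 1 D) := card_le_card_of_injOn (fun S => ∏ q ∈ S, q)
        (fun S hS => by
          exact mem_Icc.2 ⟨prod_pos fun q hq => (hF S hS q hq).pos, h.level S hS⟩)
        (fun S hS T hT hST => by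
          rw [← Nat.primeFactors_prod (hF S hS), ← Nat.primeFactors_prod (hF T hT)]
          exact congrArg Nat.primeFactors hST)
    _ = D := by simp

variable {u : ℕ → ℕ → ℝ}

lemma sum_range_prod_neg_le (hu : ∀ q, Function.Periodic (u q) q)
    (h01 : ∀ q n, u q n ∈ Set.Icc 0 1) {S : Finset ℕ} (hS : ∀ q ∈ S, q.Prime) (N : ℕ) :
    ∑ n ∈ range N, ∏ q ∈ S, -u q n ≤
      N * ∏ q ∈ S, -((∑ a ∈ range q, u q a) / q) + (∏ q ∈ S, q : ℕ) := by
  have hle : ∏ q ∈ S, ∑ a ∈ range q, u q a ≤ (∏ q ∈ S, q : ℕ) := by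
    push_cast
    refine prod_le_prod (fun q _ => sum_nonneg fun a _ => (h01 q a).1) fun q _ => ?_
    simpa using sum_le_sum fun a (_ : a ∈ range q) => (h01 q a).2
  have h := abs_sum_range_sub_le_of_periodic (prod_pos fun q hq => (hS q hq).pos)
    (periodic_prod hu S) (fun n => prod_nonneg fun q _ => (h01 q n).1) N
  rw [sum_range_prod_primes hu hS] at h
  obtain ⟨hl, hr⟩ := abs_le.1 (h.trans hle)
  push_cast at hl hr ⊢
  simp only [prod_neg, ← mul_sum, prod_div_distrib]
  rcases neg_one_pow_eq_or ℝ #S with hsign | hsign <;> rw [hsign] <;> linarith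

lemma UpperSieve.sum_range_prod_le {κ K : ℝ} {P : Finset ℕ} {F : Finset (Finset ℕ)} {D : ℕ}
    (h : UpperSieve κ P F D K) (hP : ∀ q ∈ P, q.Prime) (hu : ∀ q, Function.Periodic (u q) q)
    (h01 : ∀ q n, u q n ∈ Set.Icc 0 1) (hκ : ∀ q ∈ P, ∑ a ∈ range q, u q a ≤ κ) (N : ℕ) :
    ∑ n ∈ range N, ∏ q ∈ P, (1 - u q n) ≤
      N * (K * exp (-∑ q ∈ P, (∑ a ∈ range q, u q a) / q)) + (D : ℝ) ^ 2 := by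
  set g : ℕ → ℝ := fun q => ∑ a ∈ range q, u q a
  have hg : ∀ q, g q ≤ q := fun q => by
    simpa using sum_le_sum fun a (_ : a ∈ range q) => (h01 q a).2
  have hg01 : ∀ q ∈ P, g q / q ∈ Set.Icc 0 1 := fun q _ =>
    ⟨div_nonneg (sum_nonneg fun a _ => (h01 q a).1) q.cast_nonneg,
      div_le_one_of_le₀ (hg q) q.cast_nonneg⟩
  calc ∑ n ∈ range N, ∏ q ∈ P, (1 - u q n)
      ≤ ∑ n ∈ range N, ∑ S ∈ F, ∏ q ∈ S, -u q n :=
        sum_le_sum fun n _ => h.prod_le (u · n) fun q _ => h01 q n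
    _ = ∑ S ∈ F, ∑ n ∈ range N, ∏ q ∈ S, -u q n := sum_comm
    _ ≤ ∑ S ∈ F, (N * ∏ q ∈ S, -(g q / q) + D) := sum_le_sum fun S hS =>
        (sum_range_prod_neg_le hu h01 (fun q hq => hP q (h.subset S hS hq)) N).trans
          (add_le_add_right (by exact_mod_cast h.level S hS) _)
    _ = N * ∑ S ∈ F, ∏ q ∈ S, -(g q / q) + #F * D := by simp [sum_add_distrib, mul_sum]
    _ ≤ N * (K * exp (-∑ q ∈ P, g q / q)) + (D : ℝ) ^ 2 := by
        refine add_le_add (mul_le_mul_of_nonneg_left (h.sum_le _ hg01 fun q hq => ?_)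
          N.cast_nonneg) ?_
        · exact div_le_div_of_nonneg_right (hκ q hq) q.cast_nonneg
        · rw [sq]; gcongr; exact h.card_le hP

lemma sum_div_le_of_subset_primesLE {κ : ℝ} (hκ : 0 ≤ κ) {P : Finset ℕ} {z : ℕ}
    (hP : P ⊆ z.primesLE) {g : ℕ → ℝ} (hg : ∀ q ∈ P, g q ≤ κ) :
    ∑ q ∈ P, g q / q ≤ κ * (1 + log z) := by
  calc ∑ q ∈ P, g q / q ≤ κ * ∑ q ∈ P, (q : ℝ)⁻¹ := by
        rw [mul_sum]
        exact sum_le_sum fun q hq => mul_le_mul_of_nonneg_right (hg q hq) (by positivity)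
    _ ≤ κ * ∑ q ∈ Icc 1 z, (q : ℝ)⁻¹ := by
        refine mul_le_mul_of_nonneg_left (sum_le_sum_of_subset_of_nonneg (fun q hq => ?_)
          fun q _ _ => by positivity) hκ
        obtain ⟨hqz, hq⟩ := Nat.mem_primesLE.1 (hP hq)
        exact mem_Icc.2 ⟨hq.one_le, hqz⟩
    _ ≤ κ * (1 + log z) := by
        have h := harmonic_le_one_add_log z
        rw [harmonic_eq_sum_Icc] at h
        push_cast at h
        gcongr

lemma sum_div_le_sum_filter_le_add {κ : ℝ} (hκ : 0 ≤ κ) {P : Finset ℕ} {N z k : ℕ} (hz : 1 ≤ z)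
    (hP : P ⊆ N.primesLE) (hN : N < (z + 1) ^ k) {g : ℕ → ℝ} (hg : ∀ q ∈ P, g q ≤ κ) :
    ∑ q ∈ P, g q / q ≤ ∑ q ∈ P with q ≤ z, g q / q + κ * (k + 2) := by
  rw [← sum_filter_add_sum_filter_not P (· ≤ z)]
  gcongr
  calc ∑ q ∈ P with ¬q ≤ z, g q / q ≤ κ * ∑ q ∈ P with ¬q ≤ z, (q : ℝ)⁻¹ := by
        rw [mul_sum]
        exact sum_le_sum fun q hq =>
          mul_le_mul_of_nonneg_right (hg q (mem_filter.1 hq).1) (by positivity)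
    _ ≤ κ * (k + 2) := by
        refine mul_le_mul_of_nonneg_left (sum_inv_le_of_lt_pow hz fun q hq => ?_) hκ
        obtain ⟨hqP, hzq⟩ := mem_filter.1 hq
        obtain ⟨hqN, hq⟩ := Nat.mem_primesLE.1 (hP hqP)
        exact ⟨hq, not_le.1 hzq, hqN.trans_lt hN⟩

lemma sum_range_prod_one_sub_le_of_subset_primesLE {κ : ℝ} (hκ : 0 ≤ κ) {P : Finset ℕ} {z : ℕ}
    (hz : 1 ≤ z) (hP : P ⊆ z.primesLE) (hu : ∀ q, Function.Periodic (u q) q)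
    (h01 : ∀ q n, u q n ∈ Set.Icc 0 1) (huκ : ∀ q ∈ P, ∑ a ∈ range q, u q a ≤ κ) (N : ℕ) :
    ∑ n ∈ range N, ∏ q ∈ P, (1 - u q n) ≤
      N * (exp (exp (12 * κ)) * exp (-∑ q ∈ P, (∑ a ∈ range q, u q a) / q)) + (z : ℝ) ^ 8 := by
  obtain ⟨F, hF⟩ := UpperSieve.exists_of_subset_primesLE hκ 0 hz hP
  refine (hF.sum_range_prod_le (fun q hq => Nat.prime_of_mem_primesLE (hP hq)) hu h01 huκ
    N).trans_eq ?_
  simp only [mul_zero, pow_zero, mul_one, zero_add]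
  push_cast
  ring

/-- Sift only by the primes up to `z = N ^ (1 / (κ + 8))`; the larger ones contribute `O(κ ^ 2)` to
the exponent. -/
theorem exists_sum_range_prod_one_sub_le (κ : ℕ) : ∃ C : ℝ, 0 < C ∧ ∀ (N : ℕ) (P : Finset ℕ)
    (u : ℕ → ℕ → ℝ), P ⊆ N.primesLE → (∀ q, Function.Periodic (u q) q) →
    (∀ q n, u q n ∈ Set.Icc 0 1) → (∀ q ∈ P, ∑ a ∈ range q, u q a ≤ κ) →
    ∑ n ∈ range N, ∏ q ∈ P, (1 - u q n) ≤
      C * N * exp (-∑ q ∈ P, (∑ a ∈ range q, u q a) / q) := by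
  set K : ℝ := exp (exp (12 * κ))
  set A : ℝ := exp (κ * (κ + 11))
  refine ⟨A * (K + 1), by positivity, fun N P u hP hu h01 hκ => ?_⟩
  rcases N.eq_zero_or_pos with rfl | hN
  · simp
  set z := Nat.nthRoot (κ + 8) N
  have hzN : z ^ (κ + 8) ≤ N := Nat.pow_nthRoot_le_iff.2 (Or.inl (by lia))
  have hz : 1 ≤ z := (Nat.le_nthRoot_iff (by lia)).2 (by rwa [one_pow])
  set P₁ := {q ∈ P | q ≤ z}
  have hP₁z : P₁ ⊆ z.primesLE := fun q hq => Nat.mem_primesLE.2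
    ⟨(mem_filter.1 hq).2, Nat.prime_of_mem_primesLE (hP (mem_filter.1 hq).1)⟩
  have hκ₁ : ∀ q ∈ P₁, ∑ a ∈ range q, u q a ≤ κ := fun q hq => hκ q (mem_filter.1 hq).1
  have hS₁ := sum_div_le_of_subset_primesLE κ.cast_nonneg hP₁z hκ₁
  have hS := sum_div_le_sum_filter_le_add κ.cast_nonneg hz hP
    (Nat.lt_pow_nthRoot_add_one (by lia) N) hκ
  push_cast at hS
  set E := exp (-∑ q ∈ P, (∑ a ∈ range q, u q a) / q)
  have hsmall : exp (-∑ q ∈ P₁, (∑ a ∈ range q, u q a) / q) ≤ A * E := by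
    rw [← exp_add]
    exact exp_le_exp.2 (by nlinarith [κ.cast_nonneg (α := ℝ)])
  have hlevel : 1 ≤ A * (z : ℝ) ^ κ * E := by
    rw [← exp_log (show (0 : ℝ) < z by exact_mod_cast hz), ← exp_nat_mul, ← exp_add, ← exp_add]
    exact one_le_exp (by linarith)
  calc ∑ n ∈ range N, ∏ q ∈ P, (1 - u q n)
      ≤ ∑ n ∈ range N, ∏ q ∈ P₁, (1 - u q n) := sum_le_sum fun n _ =>
        prod_le_prod_of_subset_of_le_one (filter_subset _ _)
          (fun q _ => sub_nonneg.2 (h01 q n).2) fun q _ _ => sub_le_self _ (h01 q n).1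
    _ ≤ N * (K * (A * E)) + (z : ℝ) ^ 8 * 1 := by
        rw [mul_one]
        refine (sum_range_prod_one_sub_le_of_subset_primesLE κ.cast_nonneg hz hP₁z hu h01 hκ₁
          N).trans ?_
        gcongr
    _ ≤ N * (K * (A * E)) + (z : ℝ) ^ 8 * (A * (z : ℝ) ^ κ * E) := by gcongr
    _ = N * (K * (A * E)) + A * (z ^ (κ + 8) : ℕ) * E := by push_cast; ring
    _ ≤ N * (K * (A * E)) + A * N * E := by gcongr
    _ = A * (K + 1) * N * E := by ring

end Sieve

section ShiftedPrimeDivisors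

open Finset

lemma sum_Icc_filter_dvd {M : Type*} [AddCommMonoid M] (f : ℕ → M) {q : ℕ} (hq : 0 < q) (N : ℕ) :
    ∑ n ∈ Icc 1 N with q ∣ n, f n = ∑ m ∈ Icc 1 (N / q), f (q * m) := by
  refine (sum_nbij (q * ·) (fun m hm => ?_) (fun a _ b _ h => Nat.eq_of_mul_eq_mul_left hq h)
    (fun n hn => ?_) fun _ _ => rfl).symm
  · obtain ⟨hm₀, hm⟩ := mem_Icc.1 hm
    exact mem_filter.2 ⟨mem_Icc.2 ⟨Nat.mul_pos hq hm₀, (Nat.mul_le_mul_left q hm).trans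
      (Nat.mul_div_le N q)⟩, dvd_mul_right _ _⟩
  · obtain ⟨hn, m, rfl⟩ := mem_filter.1 (mem_coe.1 hn)
    obtain ⟨hm₀, hm⟩ := mem_Icc.1 hn
    exact ⟨m, mem_coe.2 (mem_Icc.2 ⟨Nat.pos_of_mul_pos_left hm₀,
      (Nat.le_div_iff_mul_le hq).2 (by rwa [mul_comm])⟩), rfl⟩

lemma sum_filter_exists_dvd_le {f : ℕ → ℝ} (hf : ∀ n, 0 ≤ f n) {B : Finset ℕ}
    (hB : ∀ a ∈ B, 0 < a) (N : ℕ) :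
    ∑ n ∈ Icc 1 N with ∃ a ∈ B, a ∣ n, f n ≤ ∑ a ∈ B, ∑ m ∈ Icc 1 (N / a), f (a * m) := by
  simp_rw [← sum_congr rfl fun a ha => sum_Icc_filter_dvd f (hB a ha) N, sum_filter]
  rw [sum_comm]
  refine sum_le_sum fun n _ => ?_
  split_ifs with h
  · obtain ⟨a, ha, han⟩ := h
    refine le_trans ?_ (single_le_sum (f := fun a => if a ∣ n then f n else 0)
      (fun b _ => ite_nonneg (hf n) le_rfl) ha)
    simp [han]
  · exact sum_nonneg fun _ _ => ite_nonneg (hf n) le_rfl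

/-- The number of distinct prime divisors of `n` that are at most `z`. -/
def cardDistinctFactorsLE (z n : ℕ) : ℕ := #{q ∈ z.primesLE | q ∣ n}

/-- The number of prime divisors of `n` that are at most `z`, counted with multiplicity. -/
def cardFactorsLE (z n : ℕ) : ℕ := ∑ q ∈ z.primesLE, n.factorization q

lemma cardDistinctFactorsLE_le_cardFactorsLE (z : ℕ) {n : ℕ} (hn : n ≠ 0) :
    cardDistinctFactorsLE z n ≤ cardFactorsLE z n := by
  rw [cardDistinctFactorsLE, card_filter]
  refine sum_le_sum fun q hq => ?_
  split_ifs with h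
  · exact (Nat.prime_of_mem_primesLE hq).factorization_pos_of_dvd hn h
  · exact Nat.zero_le _

lemma cardFactorsLE_mul (z : ℕ) {a b : ℕ} (ha : a ≠ 0) (hb : b ≠ 0) :
    cardFactorsLE z (a * b) = cardFactorsLE z a + cardFactorsLE z b := by
  simp [cardFactorsLE, Nat.factorization_mul ha hb, sum_add_distrib]

lemma half_pow_cardDistinctFactorsLE (z n : ℕ) :
    (1 / 2 : ℝ) ^ cardDistinctFactorsLE z n
      = ∏ q ∈ z.primesLE, (1 - if q ∣ n then (1 / 2 : ℝ) else 0) := by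
  rw [cardDistinctFactorsLE, ← prod_const, prod_filter]
  exact prod_congr rfl fun q _ => by split_ifs <;> norm_num

lemma sum_range_ite_dvd_mul_add {q c : ℕ} (hq : q.Prime) (hc : ¬q ∣ c) (d : ℕ) (r : ℝ) :
    ∑ a ∈ range q, (if q ∣ c * a + d then r else 0) = r := by
  have : Fact q.Prime := ⟨hq⟩
  have hc' : (c : ZMod q) ≠ 0 := fun h => hc ((ZMod.natCast_eq_zero_iff c q).1 h)
  have hroot : {a ∈ range q | q ∣ c * a + d} = {((-d : ZMod q) * (c : ZMod q)⁻¹).val} := by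
    ext a
    rw [mem_filter, mem_singleton, mem_range, ← ZMod.natCast_eq_zero_iff]
    push_cast
    constructor
    · rintro ⟨ha, h⟩
      have h' : (a : ZMod q) = -d * (c : ZMod q)⁻¹ := by
        field_simp
        linear_combination h
      rw [← h', ZMod.val_cast_of_lt ha]
    · rintro rfl
      refine ⟨ZMod.val_lt _, ?_⟩
      rw [ZMod.natCast_val, ZMod.cast_id]
      field_simp
      ring
  rw [← sum_filter, hroot, sum_singleton]

lemma exists_sum_range_prod_primesLE_le (κ : ℕ) : ∃ C : ℝ, 0 < C ∧
    ∀ (z N : ℕ) (u : ℕ → ℕ → ℝ) (r : ℝ), z ≤ N → (∀ q, Function.Periodic (u q) q) →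
      (∀ q n, u q n ∈ Set.Icc 0 1) → (∀ q ∈ z.primesLE, ∑ a ∈ range q, u q a = r) → r ≤ κ →
      ∑ n ∈ range N, ∏ q ∈ z.primesLE, (1 - u q n) ≤ C * N * exp (-(r * primeRecipSum z)) := by
  obtain ⟨C, hC, hsieve⟩ := exists_sum_range_prod_one_sub_le κ
  refine ⟨C, hC, fun z N u r hzN hper hu hsum hr => ?_⟩
  have hexp : ∑ q ∈ z.primesLE, (∑ a ∈ range q, u q a) / q = r * primeRecipSum z := by
    rw [primeRecipSum, mul_sum]
    exact sum_congr rfl fun q hq => by rw [hsum q hq, div_eq_mul_inv]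
  rw [← hexp]
  exact hsieve N _ u (Nat.primesLE_mono hzN) hper hu fun q hq => (hsum q hq).trans_le hr

lemma exists_sum_half_pow_le : ∃ C : ℝ, 0 < C ∧ ∀ z X : ℕ,
    ∑ m ∈ Ioc z X, (1 / 2 : ℝ) ^ cardDistinctFactorsLE z m
      ≤ C * X * exp (-(primeRecipSum z / 2)) := by
  obtain ⟨C, hC, hsieve⟩ := exists_sum_range_prod_primesLE_le 1
  refine ⟨C, hC, fun z X => ?_⟩
  rcases lt_or_ge X z with hXz | hzX
  · rw [Ioc_eq_empty_of_le hXz.le, sum_empty]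
    positivity
  let u : ℕ → ℕ → ℝ := fun q n => if q ∣ n + 1 then 1 / 2 else 0
  have hsum : ∀ q ∈ z.primesLE, ∑ a ∈ range q, u q a = 1 / 2 := fun q hq => by
    have hq := Nat.prime_of_mem_primesLE hq
    simpa [u] using sum_range_ite_dvd_mul_add hq hq.not_dvd_one 1 (1 / 2)
  have h := hsieve z X u _ hzX
    (fun q n => by simp [u, add_right_comm n q 1])
    (fun q n => by simp only [u]; split_ifs <;> norm_num)
    hsum (by norm_num)
  calc ∑ m ∈ Ioc z X, (1 / 2 : ℝ) ^ cardDistinctFactorsLE z m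
      ≤ ∑ m ∈ Ico (0 + 1) (X + 1), (1 / 2 : ℝ) ^ cardDistinctFactorsLE z m :=
        sum_le_sum_of_subset_of_nonneg (fun m hm => by simp only [mem_Ioc, mem_Ico] at hm ⊢; lia)
          fun _ _ _ => by positivity
    _ = ∑ n ∈ range X, ∏ q ∈ z.primesLE, (1 - u q n) := by
        rw [← sum_Ico_add', range_eq_Ico]
        exact sum_congr rfl fun n _ => half_pow_cardDistinctFactorsLE z (n + 1)
    _ ≤ _ := h.trans_eq (by ring_nf)

lemma exists_sum_half_pow_shifted_prime_le : ∃ C : ℝ, 0 < C ∧ ∀ z X : ℕ,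
    ∑ a ∈ Ioc z X with (a + 1).Prime, (1 / 2 : ℝ) ^ cardDistinctFactorsLE z a
      ≤ C * X * exp (-(3 * primeRecipSum z / 2)) := by
  obtain ⟨C, hC, hsieve⟩ := exists_sum_range_prod_primesLE_le 2
  refine ⟨C, hC, fun z X => ?_⟩
  rcases lt_or_ge X z with hXz | hzX
  · rw [Ioc_eq_empty_of_le hXz.le, filter_empty, sum_empty]
    positivity
  let u : ℕ → ℕ → ℝ := fun q n => if q ∣ n + 2 then 1 else if q ∣ n + 1 then 1 / 2 else 0
  have hsum : ∀ q ∈ z.primesLE, ∑ a ∈ range q, u q a = 3 / 2 := fun q hq => by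
    have hq := Nat.prime_of_mem_primesLE hq
    have hu : ∀ a, u q a = (if q ∣ 1 * a + 2 then 1 else 0) + if q ∣ 1 * a + 1 then 1 / 2 else 0 :=
      fun a => by
        have hnot : ¬(q ∣ a + 2 ∧ q ∣ a + 1) := fun h =>
          hq.not_dvd_one ((Nat.dvd_add_right h.2).1 h.1)
        by_cases h : q ∣ a + 2 <;> by_cases h' : q ∣ a + 1 <;> simp_all [u]
    simp_rw [hu, sum_add_distrib, sum_range_ite_dvd_mul_add hq hq.not_dvd_one]
    norm_num
  have h := hsieve z X u _ hzX
    (fun q n => by simp [u, add_right_comm n q])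
    (fun q n => by simp only [u]; split_ifs <;> norm_num)
    hsum (by norm_num)
  calc ∑ a ∈ Ioc z X with (a + 1).Prime, (1 / 2 : ℝ) ^ cardDistinctFactorsLE z a
      = ∑ a ∈ Ioc z X with (a + 1).Prime, ∏ q ∈ z.primesLE, (1 - u q (a - 1)) := by
        refine sum_congr rfl fun a ha => ?_
        rw [half_pow_cardDistinctFactorsLE]
        refine prod_congr rfl fun q hq => ?_
        obtain ⟨ha, hap⟩ := mem_filter.1 ha
        obtain ⟨hqz, hqp⟩ := Nat.mem_primesLE.1 hq
        have hza := (mem_Ioc.1 ha).1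
        have hqa : ¬q ∣ a + 1 := fun hd => by
          have := (Nat.prime_dvd_prime_iff_eq hqp hap).1 hd
          lia
        simp [u, show a - 1 + 2 = a + 1 by lia, show a - 1 + 1 = a by lia, hqa]
    _ ≤ ∑ a ∈ Ico (0 + 1) (X + 1), ∏ q ∈ z.primesLE, (1 - u q (a - 1)) :=
        sum_le_sum_of_subset_of_nonneg
          (fun m hm => by simp only [mem_filter, mem_Ioc, mem_Ico] at hm ⊢; lia)
          fun _ _ _ => prod_nonneg fun _ _ => by simp only [u]; split_ifs <;> norm_num
    _ = ∑ n ∈ range X, ∏ q ∈ z.primesLE, (1 - u q n) := by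
        rw [← sum_Ico_add', range_eq_Ico]
        rfl
    _ ≤ _ := h.trans_eq (by ring_nf)

lemma hasSum_half_pow_card_primeFactors_div {p : ℕ} (hp : p.Prime) :
    HasSum (fun k => (1 / 2 : ℝ) ^ #(p ^ k).primeFactors / (p ^ k : ℕ))
      (1 + 1 / 2 * ((p : ℝ) - 1)⁻¹) := by
  have hp1 : (1 : ℝ) < p := mod_cast hp.one_lt
  have hp0 : (p : ℝ) - 1 ≠ 0 := by linarith
  have hgeom : HasSum (fun k => (1 / 2 : ℝ) ^ #(p ^ (k + 1)).primeFactors / (p ^ (k + 1) : ℕ))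
      (1 / 2 * ((p : ℝ) - 1)⁻¹) := by
    rw [show 1 / 2 * ((p : ℝ) - 1)⁻¹ = 1 / 2 * (p : ℝ)⁻¹ * (1 - (p : ℝ)⁻¹)⁻¹ by field_simp]
    refine ((hasSum_geometric_of_lt_one (by positivity)
      (inv_lt_one_of_one_lt₀ hp1)).mul_left _).congr_fun fun k => ?_
    rw [Nat.primeFactors_prime_pow k.succ_ne_zero hp, card_singleton, pow_one, Nat.cast_pow,
      pow_succ, inv_pow]
    field_simp
  refine (hasSum_nat_add_iff' 1).1 ?_
  rwa [sum_range_one, pow_zero, Nat.primeFactors_one, card_empty, pow_zero, Nat.cast_one, div_one,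
    add_sub_cancel_left]

lemma sum_half_pow_div_le (z : ℕ) :
    ∑ m ∈ Icc 1 z, (1 / 2 : ℝ) ^ cardDistinctFactorsLE z m / m
      ≤ exp ((primeRecipSum z + 1) / 2) := by
  let f : ℕ → ℝ := fun m => (1 / 2) ^ #m.primeFactors / m
  have hf : ∀ m ∈ Icc 1 z, (1 / 2 : ℝ) ^ cardDistinctFactorsLE z m / m = f m := fun m hm => by
    obtain ⟨hm, hmz⟩ := mem_Icc.1 hm
    have : {q ∈ z.primesLE | q ∣ m} = m.primeFactors := by
      ext q
      simp only [mem_filter, Nat.mem_primesLE, Nat.mem_primeFactors]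
      exact ⟨fun h => ⟨h.1.2, h.2, Nat.ne_of_gt hm⟩,
        fun h => ⟨⟨(Nat.le_of_dvd hm h.2.1).trans hmz, h.1⟩, h.2.1⟩⟩
    rw [cardDistinctFactorsLE, this]
  have hpow : ∀ {p : ℕ}, p.Prime → HasSum (fun k => f (p ^ k)) (1 + 1 / 2 * ((p : ℝ) - 1)⁻¹) :=
    hasSum_half_pow_card_primeFactors_div
  calc ∑ m ∈ Icc 1 z, (1 / 2 : ℝ) ^ cardDistinctFactorsLE z m / m = ∑ m ∈ Ico 1 (z + 1), f m :=
        sum_congr rfl hf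
    _ ≤ ∏ p ∈ z.primesLE, ∑' k, f (p ^ k) :=
        sum_Ico_le_prod_primesBelow_tsum (fun _ => by positivity) (by simp [f])
          (fun h => by
            simp only [f, h.primeFactors_mul, card_union_of_disjoint h.disjoint_primeFactors]
            push_cast
            ring)
          (fun hp => (hpow hp).summable) _
    _ ≤ ∏ p ∈ z.primesLE, exp (1 / 2 * ((p : ℝ) - 1)⁻¹) :=
        prod_le_prod (fun _ _ => tsum_nonneg fun _ => by positivity) fun p hp => by
          rw [(hpow (Nat.prime_of_mem_primesLE hp)).tsum_eq, add_comm]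
          exact add_one_le_exp _
    _ ≤ exp ((primeRecipSum z + 1) / 2) := by
        rw [← exp_sum, ← mul_sum]
        gcongr
        linarith [sum_primesLE_inv_pred_le z]

lemma sum_mul_pow_factorization_le {q : ℕ} (hq : q.Prime) {t : ℝ} (ht : 1 ≤ t) (htq : t < q)
    {h : ℕ → ℝ} {B : ℝ} (hB : 0 ≤ B) (hh : ∀ m, m ≠ 0 → h (q * m) = h m)
    (hsum : ∀ N : ℕ, ∑ n ∈ Icc 1 N, h n ≤ B * N) (N : ℕ) :
    ∑ n ∈ Icc 1 N, h n * t ^ n.factorization q ≤ B * (1 + (t - 1) / (q - t)) * N := by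
  let G : ℕ → ℝ := fun N => ∑ n ∈ Icc 1 N, h n * (t ^ n.factorization q - 1)
  have hrec : ∀ N, G N = (t - 1) * ∑ n ∈ Icc 1 (N / q), h n + t * G (N / q) := fun N => by
    have hG : G N = ∑ n ∈ Icc 1 N with q ∣ n, h n * (t ^ n.factorization q - 1) := by
      refine (sum_filter_of_ne fun n _ hn => ?_).symm
      contrapose! hn
      simp [Nat.factorization_eq_zero_of_not_dvd hn]
    rw [hG, sum_Icc_filter_dvd _ hq.pos, mul_sum, mul_sum, ← sum_add_distrib]
    refine sum_congr rfl fun m hm => ?_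
    have hm : m ≠ 0 := Nat.ne_of_gt (mem_Icc.1 hm).1
    rw [hh m hm, Nat.factorization_mul hq.ne_zero hm, Finsupp.add_apply,
      hq.factorization_self, pow_add]
    ring
  have hG : ∀ N, G N ≤ B * ((t - 1) / (q - t)) * N := fun N => by
    induction N using Nat.strong_induction_on with
    | _ N ih =>
      rcases N.eq_zero_or_pos with rfl | hN
      · simp [G]
      have hqt : 0 < q - t := by linarith
      have hdiv : ((N / q : ℕ) : ℝ) ≤ N / q := Nat.cast_div_le
      rw [hrec]
      calc (t - 1) * ∑ n ∈ Icc 1 (N / q), h n + t * G (N / q)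
          ≤ (t - 1) * (B * (N / q : ℕ)) + t * (B * ((t - 1) / (q - t)) * (N / q : ℕ)) := by
            have : 0 ≤ t - 1 := by linarith
            gcongr
            · exact hsum _
            · exact ih _ (Nat.div_lt_self hN hq.one_lt)
        _ = B * (t - 1) * (q / (q - t)) * (N / q : ℕ) := by field_simp; ring
        _ ≤ B * (t - 1) * (q / (q - t)) * (N / q) := by
            have : 0 ≤ t - 1 := by linarith
            gcongr
        _ = B * ((t - 1) / (q - t)) * N := by
            have : (q : ℝ) ≠ 0 := mod_cast hq.ne_zero
            field_simp
  calc ∑ n ∈ Icc 1 N, h n * t ^ n.factorization q = ∑ n ∈ Icc 1 N, h n + G N := by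
        rw [← sum_add_distrib]
        exact sum_congr rfl fun n _ => by ring
    _ ≤ B * N + B * ((t - 1) / (q - t)) * N := add_le_add (hsum N) (hG N)
    _ = B * (1 + (t - 1) / (q - t)) * N := by ring

lemma sum_prod_pow_factorization_le {t : ℝ} (ht : 1 ≤ t) (ht2 : t < 2) {P : Finset ℕ}
    (hP : ∀ q ∈ P, q.Prime) (N : ℕ) :
    ∑ n ∈ Icc 1 N, ∏ q ∈ P, t ^ n.factorization q ≤ (∏ q ∈ P, (1 + (t - 1) / (q - t))) * N := by
  induction P using Finset.induction_on generalizing N with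
  | empty => simp
  | insert q P hqP ih =>
    obtain ⟨hq, hP⟩ := (forall_mem_insert _ _ _).1 hP
    have htq : ∀ q : ℕ, q.Prime → t < q := fun q hq => ht2.trans_le (mod_cast hq.two_le)
    simp_rw [prod_insert hqP, mul_comm (t ^ _) _, mul_comm (1 + (t - 1) / ((q : ℝ) - t)) _]
    refine sum_mul_pow_factorization_le hq ht (htq q hq) (prod_nonneg fun r hr => ?_)
      (fun m hm => prod_congr rfl fun r hr => ?_) (ih hP) N
    · have := htq r (hP r hr)
      exact add_nonneg zero_le_one (div_nonneg (by linarith) (by linarith))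
    · rw [Nat.factorization_mul hq.ne_zero hm, Finsupp.add_apply, hq.factorization,
        Finsupp.single_eq_of_ne (ne_of_mem_of_not_mem hr hqP), zero_add]

lemma one_third_div_sub_le {x : ℝ} (hx : 2 ≤ x) :
    (4 / 3 - 1) / (x - 4 / 3) ≤ x⁻¹ / 3 + 2 / 3 * (x * (x - 1))⁻¹ := by
  have hx1 : 0 < x - 1 := by linarith
  rw [div_le_iff₀ (by linarith)]
  calc (4 / 3 - 1 : ℝ) ≤ (x + 1) * (x - 4 / 3) / (3 * (x * (x - 1))) := by
        rw [le_div_iff₀ (by positivity)]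
        nlinarith
    _ = (x⁻¹ / 3 + 2 / 3 * (x * (x - 1))⁻¹) * (x - 4 / 3) := by
        field_simp
        ring

lemma sum_pow_cardFactorsLE_le (z N : ℕ) :
    ∑ n ∈ Icc 1 N, (4 / 3 : ℝ) ^ cardFactorsLE z n ≤ exp ((primeRecipSum z + 2) / 3) * N := by
  simp_rw [cardFactorsLE, ← prod_pow_eq_pow_sum]
  refine (sum_prod_pow_factorization_le (by norm_num) (by norm_num)
    (fun _ => Nat.prime_of_mem_primesLE) N).trans ?_
  gcongr
  have hq2 : ∀ q ∈ z.primesLE, (2 : ℝ) ≤ q := fun q hq =>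
    mod_cast (Nat.prime_of_mem_primesLE hq).two_le
  calc ∏ q ∈ z.primesLE, (1 + (4 / 3 - 1) / ((q : ℝ) - 4 / 3))
      ≤ ∏ q ∈ z.primesLE, exp ((q : ℝ)⁻¹ / 3 + 2 / 3 * ((q : ℝ) * (q - 1))⁻¹) :=
        prod_le_prod (fun q hq => add_nonneg zero_le_one
          (div_nonneg (by norm_num) (by linarith [hq2 q hq]))) fun q hq => by
          linarith [one_third_div_sub_le (hq2 q hq),
            add_one_le_exp ((q : ℝ)⁻¹ / 3 + 2 / 3 * ((q : ℝ) * (q - 1))⁻¹)]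
    _ ≤ exp ((primeRecipSum z + 2) / 3) := by
        rw [← exp_sum, sum_add_distrib, ← sum_div, ← mul_sum, ← primeRecipSum]
        gcongr
        linarith [sum_primesLE_inv_mul_pred_le z]

end ShiftedPrimeDivisors

section NaturalDensity

open Finset Topology

open Classical in
/-- The counting function `#(A ∩ [1, x])`. -/
noncomputable def countUpTo (A : Set ℕ) (x : ℕ) : ℕ := #{n ∈ Icc 1 x | n ∈ A}

/-- The set `A` has natural density `δ`, taken along natural numbers `x`. -/
def HasNatDensity (A : Set ℕ) (δ : ℝ) : Prop :=
  Tendsto (fun x : ℕ => (countUpTo A x : ℝ) / x) atTop (𝓝 δ)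

/-- The set of positive integers divisible by some element of `D`, together with `0` when `D` is
nonempty. -/
def multiplesOf (D : Set ℕ) : Set ℕ := {n | ∃ d ∈ D, d ∣ n}

/-- The multiples of the large elements of `D` have small upper density, uniformly in `x`. -/
def HasThinTails (D : Set ℕ) : Prop :=
  ∀ ε : ℝ, 0 < ε → ∃ y : ℕ, ∀ x : ℕ, (countUpTo (multiplesOf (D ∩ Set.Ici y)) x : ℝ) ≤ ε * x

open Classical in
/-- The number of divisors of `n` lying in `D`. -/
noncomputable def cardDivisorsIn (D : Set ℕ) (n : ℕ) : ℕ := #{d ∈ n.divisors | d ∈ D}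

variable {A B E D : Set ℕ}

lemma countUpTo_univ (x : ℕ) : countUpTo Set.univ x = x := by simp [countUpTo]

lemma countUpTo_mono (h : ∀ n ≠ 0, n ∈ A → n ∈ B) (x : ℕ) : countUpTo A x ≤ countUpTo B x := by
  classical
  refine card_le_card fun n hn => ?_
  obtain ⟨hnx, hnA⟩ := mem_filter.1 hn
  exact mem_filter.2 ⟨hnx, h n (Nat.ne_of_gt (mem_Icc.1 hnx).1) hnA⟩

lemma countUpTo_le_add (h : ∀ n ≠ 0, n ∈ A → n ∈ B ∨ n ∈ E) (x : ℕ) :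
    countUpTo A x ≤ countUpTo B x + countUpTo E x := by
  classical
  refine (card_le_card fun n hn => ?_).trans (card_union_le _ _)
  obtain ⟨hnx, hnA⟩ := mem_filter.1 hn
  rw [← filter_or]
  exact mem_filter.2 ⟨hnx, h n (Nat.ne_of_gt (mem_Icc.1 hnx).1) hnA⟩

lemma countUpTo_le_mul {c : ℕ} (hc : 0 < c) (h : ∀ m ≠ 0, m ∈ A → c * m ∈ B) (x : ℕ) :
    countUpTo A x ≤ countUpTo B (c * x) := by
  refine card_le_card_of_injOn (c * ·) (fun m hm => ?_) (mul_right_injective₀ hc.ne').injOn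
  simp only [coe_filter, mem_Icc, Set.mem_ofPred_eq] at hm ⊢
  exact ⟨⟨Nat.mul_pos hc hm.1.1, Nat.mul_le_mul_left c hm.1.2⟩, h m (Nat.ne_of_gt hm.1.1) hm.2⟩

lemma countUpTo_mul_le {c : ℕ} (hc : 0 < c) (h : ∀ m, c * m ∈ A → m ∈ B) (hA : ∀ n ∈ A, c ∣ n)
    (x : ℕ) : countUpTo A (c * x) ≤ countUpTo B x := by
  classical
  refine card_le_card_of_injOn (· / c) (fun n hn => ?_) fun m hm n hn hmn => ?_
  · simp only [coe_filter, mem_Icc, Set.mem_ofPred_eq] at hn ⊢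
    obtain ⟨m, rfl⟩ := hA n hn.2
    rw [Nat.mul_div_cancel_left m hc]
    exact ⟨⟨Nat.pos_of_mul_pos_left hn.1.1, Nat.le_of_mul_le_mul_left hn.1.2 hc⟩, h m hn.2⟩
  · rw [← Nat.div_mul_cancel (hA m (mem_filter.1 hm).2),
      ← Nat.div_mul_cancel (hA n (mem_filter.1 hn).2)]
    exact congrArg (· * c) hmn

namespace HasNatDensity

lemma congr {δ : ℝ} (hA : HasNatDensity A δ) (h : ∀ n ≠ 0, n ∈ A ↔ n ∈ B) :
    HasNatDensity B δ :=
  Tendsto.congr (fun x => congrArg (fun c : ℕ => (c : ℝ) / x) <| le_antisymm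
    (countUpTo_mono (fun n hn => (h n hn).1) x) (countUpTo_mono (fun n hn => (h n hn).2) x)) hA

lemma tendsto_mul {δ : ℝ} (hA : HasNatDensity A δ) {c : ℕ} (hc : 0 < c) :
    Tendsto (fun x : ℕ => (countUpTo A (c * x) : ℝ) / (c * x)) atTop (𝓝 δ) := by
  simpa [Function.comp_def] using hA.comp (tendsto_id.const_mul_atTop' hc)

lemma tendsto_floor {δ : ℝ} (hA : HasNatDensity A δ) :
    Tendsto (fun x : ℝ => (countUpTo A ⌊x⌋₊ : ℝ) / x) atTop (𝓝 δ) := by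
  have hmul := (hA.comp tendsto_nat_floor_atTop).mul (tendsto_nat_floor_div_atTop (R := ℝ))
  rw [mul_one] at hmul
  refine hmul.congr' ?_
  filter_upwards [eventually_ge_atTop 1] with x hx
  have hfloor : (0 : ℝ) < ⌊x⌋₊ := by exact_mod_cast Nat.floor_pos.2 hx
  simp only [Function.comp_apply]
  field_simp

lemma exists_of_approx (h : ∀ ε : ℝ, 0 < ε → ∃ (B : Set ℕ) (β : ℝ), HasNatDensity B β ∧
    ∀ x : ℕ, |(countUpTo A x : ℝ) - countUpTo B x| ≤ ε * x) : ∃ δ, HasNatDensity A δ := by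
  refine cauchySeq_tendsto_of_complete (Metric.cauchySeq_iff'.2 fun ε hε => ?_)
  obtain ⟨B, β, hB, hAB⟩ := h (ε / 4) (by positivity)
  have hdist : ∀ x : ℕ, |(countUpTo A x : ℝ) / x - countUpTo B x / x| ≤ ε / 4 := fun x => by
    rw [← sub_div, abs_div, Nat.abs_cast]
    exact div_le_of_le_mul₀ (by positivity) (by positivity) (hAB x)
  obtain ⟨N, hN⟩ := Metric.cauchySeq_iff'.1 hB.cauchySeq (ε / 4) (by positivity)
  refine ⟨N, fun n hn => ?_⟩
  have hB' := abs_lt.1 (hN n hn)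
  have hn' := abs_le.1 (hdist n)
  have hN' := abs_le.1 (hdist N)
  exact abs_lt.2 ⟨by linarith, by linarith⟩

lemma exists_of_periodic {d : ℕ} (hd : 0 < d) (hA : Function.Periodic (· ∈ A) d) :
    ∃ δ, HasNatDensity A δ := by
  classical
  let f : ℕ → ℝ := fun n => if n ∈ A then 1 else 0
  have hf0 : ∀ n, 0 ≤ f n := fun n => by positivity
  have hf1 : f 0 ≤ 1 := by simp only [f]; split_ifs <;> norm_num
  have hf : Function.Periodic f d := fun n => by simp only [f, hA n]
  set M := ∑ n ∈ range d, f n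
  have hcount : ∀ x : ℕ, |(countUpTo A x : ℝ) - x * (M / d)| ≤ M + 1 + |M / d| := fun x => by
    have hsum : (countUpTo A x : ℝ) = ∑ n ∈ range (x + 1), f n - f 0 := by
      rw [countUpTo, card_filter, range_eq_Ico, sum_eq_sum_Ico_succ_bot (by omega)]
      push_cast
      rw [add_sub_cancel_left]
      rfl
    have happrox := abs_le.1 (abs_sum_range_sub_le_of_periodic hd hf hf0 (x + 1))
    have habs := abs_le.1 (le_refl |M / d|)
    push_cast at happrox
    rw [hsum]
    exact abs_le.2 ⟨by linarith [hf0 0], by linarith [hf0 0]⟩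
  refine ⟨M / d, tendsto_iff_dist_tendsto_zero.2 <| squeeze_zero' (.of_forall fun _ => dist_nonneg)
    ?_ (tendsto_const_div_atTop_nhds_zero_nat (M + 1 + |M / d|))⟩
  filter_upwards [eventually_gt_atTop 0] with x hx
  have hx' : (0 : ℝ) < x := by exact_mod_cast hx
  rw [Real.dist_eq, le_div_iff₀ hx', ← abs_of_pos hx', ← abs_mul, abs_of_pos hx', sub_mul,
    div_mul_cancel₀ _ hx'.ne', mul_comm (M / d)]
  exact hcount x

end HasNatDensity

lemma div_gcd_dvd_iff {d n m : ℕ} (hn : 0 < n) : d / d.gcd n ∣ m ↔ d ∣ n * m := by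
  rw [Nat.div_dvd_iff_dvd_mul (Nat.gcd_dvd_left d n) (Nat.gcd_pos_of_pos_right d hn),
    Nat.dvd_gcd_mul_iff_dvd_mul]

namespace HasThinTails

lemma exists_hasNatDensity_cardDivisorsIn_eq (hD : HasThinTails D) (k : ℕ) :
    ∃ δ, HasNatDensity {n | cardDivisorsIn D n = k} δ := by
  classical
  refine HasNatDensity.exists_of_approx fun ε hε => ?_
  obtain ⟨y, hy⟩ := hD ε hε
  let B : Set ℕ := {n | #{d ∈ Ico 1 y | d ∈ D ∧ d ∣ n} = k}
  have hB : Function.Periodic (· ∈ B) y.factorial := fun n => by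
    simp only [B, Set.mem_ofPred_eq]
    congr 2
    refine filter_congr fun d hd => and_congr_right fun _ => ?_
    obtain ⟨hd1, hdy⟩ := mem_Ico.1 hd
    exact Nat.dvd_add_left (Nat.dvd_factorial hd1 hdy.le)
  obtain ⟨β, hβ⟩ := HasNatDensity.exists_of_periodic y.factorial_pos hB
  have hagree : ∀ n ≠ 0, n ∉ multiplesOf (D ∩ Set.Ici y) →
      (n ∈ {n | cardDivisorsIn D n = k} ↔ n ∈ B) := fun n hn hny => by
    have hdiv : ({d ∈ n.divisors | d ∈ D} : Finset ℕ) = {d ∈ Ico 1 y | d ∈ D ∧ d ∣ n} := by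
      ext d
      simp only [mem_filter, Nat.mem_divisors, mem_Ico]
      refine ⟨fun ⟨⟨hdn, _⟩, hdD⟩ => ⟨⟨Nat.pos_of_dvd_of_pos hdn (Nat.pos_of_ne_zero hn), ?_⟩,
        hdD, hdn⟩, fun ⟨_, hdD, hdn⟩ => ⟨⟨hdn, hn⟩, hdD⟩⟩
      exact not_le.1 fun hyd => hny ⟨d, ⟨hdD, hyd⟩, hdn⟩
    simp only [B, cardDivisorsIn, Set.mem_ofPred_eq, hdiv]
  refine ⟨B, β, hβ, fun x => abs_sub_le_iff.2 ⟨?_, ?_⟩⟩ <;>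
  refine le_trans (sub_le_iff_le_add'.2 ?_) (hy x) <;>
  refine mod_cast countUpTo_le_add (fun n hn hnA => ?_) x <;>
  by_cases hny : n ∈ multiplesOf (D ∩ Set.Ici y)
  · exact Or.inr hny
  · exact Or.inl ((hagree n hn hny).1 hnA)
  · exact Or.inr hny
  · exact Or.inl ((hagree n hn hny).2 hnA)

lemma exists_hasNatDensity_compl_multiplesOf (hD : HasThinTails D) :
    ∃ δ, HasNatDensity (multiplesOf D)ᶜ δ := by
  obtain ⟨δ, hδ⟩ := hD.exists_hasNatDensity_cardDivisorsIn_eq 0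
  refine ⟨δ, hδ.congr fun n hn => ?_⟩
  simp only [cardDivisorsIn, Set.mem_ofPred_eq, card_eq_zero, filter_eq_empty_iff,
    Nat.mem_divisors, multiplesOf, Set.mem_compl_iff, not_exists, not_and]
  exact forall_congr' fun d => ⟨fun h hdD hdn => h ⟨hdn, hn⟩ hdD, fun h hdn hdD => h hdD hdn.1⟩

lemma mono {D' : Set ℕ} (hD : HasThinTails D) (h : D' ⊆ D) : HasThinTails D' := fun ε hε => by
  obtain ⟨y, hy⟩ := hD ε hε
  refine ⟨y, fun x => le_trans (Nat.cast_le.2 (countUpTo_mono ?_ x)) (hy x)⟩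
  exact fun n _ ⟨d, hd, hdn⟩ => ⟨d, ⟨h hd.1, hd.2⟩, hdn⟩

/-- Passing from the elements `> y` of `D` to the elements `≥ y` only costs the fraction `1 / y`
of the remaining density. -/
lemma exists_pos_hasNatDensity_inter_Ici (hD : HasThinTails D) (h1 : 1 ∉ D) {y : ℕ}
    (hy : ∃ δ, 0 < δ ∧ HasNatDensity (multiplesOf (D ∩ Set.Ici (y + 1)))ᶜ δ) :
    ∃ δ, 0 < δ ∧ HasNatDensity (multiplesOf (D ∩ Set.Ici y))ᶜ δ := by
  obtain ⟨δ, hδ0, hδ⟩ := hy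
  set S := multiplesOf (D ∩ Set.Ici y)
  set S' := multiplesOf (D ∩ Set.Ici (y + 1))
  have hSS' : ∀ n ≠ 0, n ∈ S → n ∉ S' → y ∈ D ∧ 1 < y ∧ y ∣ n := by
    rintro n hn ⟨d, ⟨hdD, hyd⟩, hdn⟩ hnS'
    obtain rfl : d = y := le_antisymm (not_lt.1 fun hlt => hnS' ⟨d, ⟨hdD, hlt⟩, hdn⟩) hyd
    have hd0 := ne_zero_of_dvd_ne_zero hn hdn
    have hd1 : d ≠ 1 := fun h => h1 (h ▸ hdD)
    exact ⟨hdD, by omega, hdn⟩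
  obtain ⟨δ', hδ'⟩ := (hD.mono Set.inter_subset_left).exists_hasNatDensity_compl_multiplesOf
    (D := D ∩ Set.Ici y)
  rcases le_or_gt y 1 with hy1 | hy1
  · refine ⟨δ, hδ0, hδ.congr fun n hn => not_congr ⟨?_, fun h => ?_⟩⟩
    · exact fun ⟨d, ⟨hdD, hyd⟩, hdn⟩ => ⟨d, ⟨hdD, (Nat.le_succ y).trans hyd⟩, hdn⟩
    · by_contra hS'
      exact hy1.not_gt (hSS' n hn h hS').2.1
  · refine ⟨δ', ?_, hδ'⟩
    have hy0 : 0 < y := zero_lt_one.trans hy1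
    have hcount : ∀ x, countUpTo S'ᶜ (y * x) ≤ countUpTo Sᶜ (y * x) + countUpTo S'ᶜ x := fun x => by
      refine (countUpTo_le_add (E := {n | y ∣ n ∧ n ∉ S'}) (fun n hn hnS' => ?_) _).trans
        (Nat.add_le_add_left (countUpTo_mul_le hy0 (fun m hm => ?_) (fun n hn => hn.1) x) _)
      · by_cases hnS : n ∈ S
        · exact Or.inr ⟨(hSS' n hn hnS hnS').2.2, hnS'⟩
        · exact Or.inl hnS
      · exact fun ⟨d, hd, hdm⟩ => hm.2 ⟨d, hd, hdm.mul_left y⟩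
    have hle : δ ≤ δ' + δ / y := by
      refine le_of_tendsto_of_tendsto' (hδ.tendsto_mul hy0)
        ((hδ'.tendsto_mul hy0).add (hδ.div_const (y : ℝ))) fun x => ?_
      rw [div_div, mul_comm (x : ℝ), ← add_div]
      gcongr
      exact_mod_cast hcount x
    linarith [div_lt_self hδ0 (Nat.one_lt_cast.2 hy1 : (1 : ℝ) < y)]

theorem exists_pos_hasNatDensity_compl_multiplesOf (hD : HasThinTails D) (h1 : 1 ∉ D) :
    ∃ δ, 0 < δ ∧ HasNatDensity (multiplesOf D)ᶜ δ := by
  obtain ⟨y, hy⟩ := hD (1 / 2) one_half_pos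
  obtain ⟨δ, hδ⟩ := (hD.mono Set.inter_subset_left).exists_hasNatDensity_compl_multiplesOf
    (D := D ∩ Set.Ici y)
  have hhalf : 1 / 2 ≤ δ := by
    refine ge_of_tendsto hδ ?_
    filter_upwards [eventually_gt_atTop 0] with x hx
    have hsplit : (x : ℝ) ≤ countUpTo (multiplesOf (D ∩ Set.Ici y))ᶜ x
        + countUpTo (multiplesOf (D ∩ Set.Ici y)) x := by
      have hcover := countUpTo_le_add (A := Set.univ)
        (fun n _ _ => (em (n ∈ multiplesOf (D ∩ Set.Ici y))).symm) x
      rw [countUpTo_univ] at hcover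
      exact_mod_cast hcover
    rw [le_div_iff₀ (by exact_mod_cast hx)]
    linarith [hy x]
  have hdescend : ∀ w, (∃ δ, 0 < δ ∧ HasNatDensity (multiplesOf (D ∩ Set.Ici w))ᶜ δ) →
      ∃ δ, 0 < δ ∧ HasNatDensity (multiplesOf (D ∩ Set.Ici 0))ᶜ δ := fun w => by
    induction w with
    | zero => exact id
    | succ w ih => exact fun hw => ih (hD.exists_pos_hasNatDensity_inter_Ici h1 hw)
  rw [← Set.inter_eq_left.2 fun (d : ℕ) (_ : d ∈ D) => Set.mem_Ici.2 d.zero_le]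
  exact hdescend y ⟨δ, by linarith, hδ⟩

/-- The multiples `n m` of `n` having no divisors in `D` other than those of `n` correspond to the
`m` without divisors in the set of all `d / gcd(d, n)` with `d ∈ D`, `d ∤ n`. -/
lemma image_div_gcd (hD : HasThinTails D) {n : ℕ} (hn : n ≠ 0) :
    HasThinTails ((fun d : ℕ => d / d.gcd n) '' {d ∈ D | ¬d ∣ n}) := fun ε hε => by
  have hn' : 0 < n := Nat.pos_of_ne_zero hn
  obtain ⟨y, hy⟩ := hD (ε / n) (by positivity)
  refine ⟨y, fun x => ?_⟩
  have hcount := countUpTo_le_mul (A := multiplesOf ((fun d : ℕ => d / d.gcd n) ''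
    {d ∈ D | ¬d ∣ n} ∩ Set.Ici y)) (B := multiplesOf (D ∩ Set.Ici y)) hn' ?_ x
  · calc _ ≤ (countUpTo (multiplesOf (D ∩ Set.Ici y)) (n * x) : ℝ) := by exact_mod_cast hcount
      _ ≤ ε / n * (n * x : ℕ) := hy _
      _ = ε * x := by push_cast; field_simp
  · rintro m - ⟨_, ⟨⟨d, ⟨hdD, _⟩, rfl⟩, hyd⟩, hdm⟩
    exact ⟨d, ⟨hdD, hyd.trans (Nat.div_le_self _ _)⟩, (div_gcd_dvd_iff hn').1 hdm⟩

theorem exists_pos_hasNatDensity_cardDivisorsIn_eq (hD : HasThinTails D) {n : ℕ} (hn : n ≠ 0) :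
    ∃ δ, 0 < δ ∧ HasNatDensity {m | cardDivisorsIn D m = cardDivisorsIn D n} δ := by
  classical
  have hn' : 0 < n := Nat.pos_of_ne_zero hn
  obtain ⟨δ, hδ⟩ := hD.exists_hasNatDensity_cardDivisorsIn_eq (cardDivisorsIn D n)
  let D' := (fun d : ℕ => d / d.gcd n) '' {d ∈ D | ¬d ∣ n}
  have h1 : 1 ∉ D' := by
    rintro ⟨d, ⟨_, hdn⟩, hd⟩
    exact hdn (Nat.gcd_eq_left_iff_dvd.1
      (Nat.eq_of_dvd_of_div_eq_one (Nat.gcd_dvd_left d n) hd))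
  obtain ⟨δ', hδ'0, hδ'⟩ := (hD.image_div_gcd hn).exists_pos_hasNatDensity_compl_multiplesOf h1
  have hmem : ∀ m ≠ 0, m ∈ (multiplesOf D')ᶜ →
      n * m ∈ {m | cardDivisorsIn D m = cardDivisorsIn D n} := fun m hm0 hm => by
    have hdvd : ∀ d ∈ D, d ∣ n * m ↔ d ∣ n := fun d hd => by
      refine ⟨fun hdnm => by_contra fun hdn => hm ?_, fun hdn => hdn.mul_right m⟩
      exact ⟨_, ⟨d, ⟨hd, hdn⟩, rfl⟩, (div_gcd_dvd_iff hn').2 hdnm⟩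
    refine congrArg card (Finset.ext fun d => ?_)
    simp only [mem_filter, Nat.mem_divisors, mul_ne_zero hn hm0, ne_eq, hn, not_false_eq_true,
      and_true]
    exact and_congr_left fun hd => hdvd d hd
  refine ⟨δ, (div_pos hδ'0 (Nat.cast_pos.2 hn')).trans_le ?_, hδ⟩
  refine le_of_tendsto_of_tendsto' (hδ'.div_const (n : ℝ)) (hδ.tendsto_mul hn') fun x => ?_
  rw [div_div, mul_comm (x : ℝ)]
  gcongr
  exact countUpTo_le_mul hn' hmem x

end HasThinTails

end NaturalDensity

section ErdosWagstaff

open Finset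

/-- The numbers `a ∈ (z, z²]` with `a + 1` prime. -/
def shiftedPrimeBlock (z : ℕ) : Finset ℕ := {a ∈ Ioc z (z ^ 2) | (a + 1).Prime}

lemma pos_of_mem_shiftedPrimeBlock {z a : ℕ} (ha : a ∈ shiftedPrimeBlock z) : 0 < a :=
  (mem_Ioc.1 (mem_filter.1 ha).1).1.pos

lemma natLog_sq_add_one_le {z : ℕ} (hz : 2 ≤ z) : (Nat.log 2 (z ^ 2) + 1 : ℝ) ≤ 5 * log z := by
  have hlog : log 2 ≤ log z := log_le_log two_pos (mod_cast hz)
  have hpow : log ((2 : ℝ) ^ Nat.log 2 (z ^ 2)) ≤ log ((z : ℝ) ^ 2) :=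
    log_le_log (by positivity) (mod_cast Nat.pow_log_le_self 2 (by positivity))
  rw [log_pow, log_pow, Nat.cast_ofNat] at hpow
  have := mul_le_mul_of_nonneg_left log_two_gt_d9.le (Nat.cast_nonneg' (Nat.log 2 (z ^ 2)))
  linarith [log_two_gt_d9]

lemma sum_block_natLog_half_pow_div_le {C : ℝ} (hC : ∀ z X : ℕ,
    ∑ a ∈ Ioc z X with (a + 1).Prime, (1 / 2 : ℝ) ^ cardDistinctFactorsLE z a
      ≤ C * X * exp (-(3 * primeRecipSum z / 2))) (z i : ℕ) :
    ∑ a ∈ shiftedPrimeBlock z with Nat.log 2 a = i, (1 / 2 : ℝ) ^ cardDistinctFactorsLE z a / a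
      ≤ 2 * C * exp (-(3 * primeRecipSum z / 2)) := by
  calc ∑ a ∈ shiftedPrimeBlock z with Nat.log 2 a = i, (1 / 2 : ℝ) ^ cardDistinctFactorsLE z a / a
      ≤ ∑ a ∈ shiftedPrimeBlock z with Nat.log 2 a = i,
          (1 / 2 : ℝ) ^ cardDistinctFactorsLE z a / 2 ^ i := by
        refine sum_le_sum fun a ha => ?_
        obtain ⟨haz, rfl⟩ := mem_filter.1 ha
        gcongr
        exact_mod_cast Nat.pow_log_le_self 2 (pos_of_mem_shiftedPrimeBlock haz).ne'
    _ ≤ ∑ a ∈ Ioc z (2 ^ (i + 1)) with (a + 1).Prime,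
          (1 / 2 : ℝ) ^ cardDistinctFactorsLE z a / 2 ^ i := by
        refine sum_le_sum_of_subset_of_nonneg (fun a ha => ?_) fun _ _ _ => by positivity
        obtain ⟨haz, rfl⟩ := mem_filter.1 ha
        obtain ⟨haz, hap⟩ := mem_filter.1 haz
        exact mem_filter.2 ⟨mem_Ioc.2 ⟨(mem_Ioc.1 haz).1,
          (Nat.lt_pow_succ_log_self one_lt_two a).le⟩, hap⟩
    _ ≤ _ := by
        rw [← sum_div, div_le_iff₀ (by positivity)]
        refine (hC z _).trans_eq ?_
        push_cast
        ring

lemma exists_sum_block_half_pow_div_le : ∃ C : ℝ, 0 < C ∧ ∀ z : ℕ,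
    ∑ a ∈ shiftedPrimeBlock z, (1 / 2 : ℝ) ^ cardDistinctFactorsLE z a / a
      ≤ C * exp (-(primeRecipSum z / 2)) := by
  obtain ⟨C, hC, hsum⟩ := exists_sum_half_pow_shifted_prime_le
  refine ⟨10 * C * exp 1, by positivity, fun z => ?_⟩
  rcases lt_or_ge z 2 with hz | hz
  · have : shiftedPrimeBlock z = ∅ := by interval_cases z <;> rfl
    rw [this, sum_empty]
    positivity
  have hmaps : ∀ a ∈ shiftedPrimeBlock z, Nat.log 2 a ∈ range (Nat.log 2 (z ^ 2) + 1) :=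
    fun a ha => mem_range_succ_iff.2 (Nat.log_mono_right (mem_Ioc.1 (mem_filter.1 ha).1).2)
  have hexp : exp (-(primeRecipSum z / 2))
      = exp (primeRecipSum z) * exp (-(3 * primeRecipSum z / 2)) := by
    rw [← exp_add]
    ring_nf
  rw [← sum_fiberwise_of_maps_to hmaps]
  calc ∑ i ∈ range (Nat.log 2 (z ^ 2) + 1), ∑ a ∈ shiftedPrimeBlock z with Nat.log 2 a = i,
        (1 / 2 : ℝ) ^ cardDistinctFactorsLE z a / a
      ≤ (Nat.log 2 (z ^ 2) + 1) * (2 * C * exp (-(3 * primeRecipSum z / 2))) := by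
        refine (sum_le_sum fun i _ => sum_block_natLog_half_pow_div_le hsum z i).trans_eq ?_
        simp
    _ ≤ 5 * exp (primeRecipSum z + 1) * (2 * C * exp (-(3 * primeRecipSum z / 2))) := by
        gcongr
        linarith [natLog_sq_add_one_le hz, log_le_exp_primeRecipSum z]
    _ = 10 * C * exp 1 * exp (-(primeRecipSum z / 2)) := by
        rw [hexp, exp_add]
        ring

lemma exists_sum_block_sum_large_le : ∃ C : ℝ, 0 < C ∧ ∀ z x : ℕ,
    ∑ a ∈ shiftedPrimeBlock z, ∑ m ∈ Ioc z (x / a),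
      (1 / 2 : ℝ) ^ cardDistinctFactorsLE z a * (1 / 2) ^ cardDistinctFactorsLE z m
      ≤ C * x * exp (-primeRecipSum z) := by
  obtain ⟨C, hC, hsum⟩ := exists_sum_half_pow_le
  obtain ⟨C', hC', hblock⟩ := exists_sum_block_half_pow_div_le
  refine ⟨C * C', by positivity, fun z x => ?_⟩
  set E := exp (-(primeRecipSum z / 2)) with hE
  calc ∑ a ∈ shiftedPrimeBlock z, ∑ m ∈ Ioc z (x / a),
        (1 / 2 : ℝ) ^ cardDistinctFactorsLE z a * (1 / 2) ^ cardDistinctFactorsLE z m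
      ≤ ∑ a ∈ shiftedPrimeBlock z, (1 / 2 : ℝ) ^ cardDistinctFactorsLE z a * (C * (x / a) * E) := by
        refine sum_le_sum fun a _ => ?_
        rw [← mul_sum]
        gcongr
        refine (hsum z (x / a)).trans ?_
        gcongr
        exact Nat.cast_div_le
    _ = C * x * E * ∑ a ∈ shiftedPrimeBlock z, (1 / 2 : ℝ) ^ cardDistinctFactorsLE z a / a := by
        rw [mul_sum]
        exact sum_congr rfl fun a _ => by ring
    _ ≤ C * x * E * (C' * E) := by
        gcongr
        exact hblock z
    _ = C * C' * x * exp (-primeRecipSum z) := by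
        rw [show exp (-primeRecipSum z) = E * E by rw [hE, ← exp_add]; ring_nf]
        ring

lemma exists_sum_block_sum_small_le : ∃ C : ℝ, 0 < C ∧ ∀ z x : ℕ,
    ∑ a ∈ shiftedPrimeBlock z, ∑ m ∈ Icc 1 (x / a) with m ≤ z,
      (1 / 2 : ℝ) ^ cardDistinctFactorsLE z a * (1 / 2) ^ cardDistinctFactorsLE z m
      ≤ C * x * exp (-primeRecipSum z) := by
  obtain ⟨C, hC, hsum⟩ := exists_sum_half_pow_shifted_prime_le
  refine ⟨C * exp (1 / 2), by positivity, fun z x => ?_⟩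
  rw [sum_comm' (t' := Icc 1 z) (s' := fun m => {a ∈ shiftedPrimeBlock z | a ≤ x / m})]
  swap
  · intro a m
    simp only [mem_filter, mem_Icc]
    constructor
    · rintro ⟨ha, ⟨hm, hma⟩, hmz⟩
      have hmul := (Nat.le_div_iff_mul_le (pos_of_mem_shiftedPrimeBlock ha)).1 hma
      exact ⟨⟨ha, (Nat.le_div_iff_mul_le hm).2 (by rwa [mul_comm])⟩, hm, hmz⟩
    · rintro ⟨⟨ha, ham⟩, hm, hmz⟩
      have hmul := (Nat.le_div_iff_mul_le hm).1 ham
      exact ⟨ha, ⟨hm, (Nat.le_div_iff_mul_le (pos_of_mem_shiftedPrimeBlock ha)).2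
        (by rwa [mul_comm])⟩, hmz⟩
  set E := exp (-(3 * primeRecipSum z / 2)) with hE
  calc ∑ m ∈ Icc 1 z, ∑ a ∈ shiftedPrimeBlock z with a ≤ x / m,
        (1 / 2 : ℝ) ^ cardDistinctFactorsLE z a * (1 / 2) ^ cardDistinctFactorsLE z m
      ≤ ∑ m ∈ Icc 1 z, C * (x / m) * E * (1 / 2 : ℝ) ^ cardDistinctFactorsLE z m := by
        refine sum_le_sum fun m _ => ?_
        rw [← sum_mul]
        gcongr
        refine (sum_le_sum_of_subset_of_nonneg (t := {a ∈ Ioc z (x / m) | (a + 1).Prime})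
          (fun a ha => ?_) fun _ _ _ => by positivity).trans ((hsum z (x / m)).trans ?_)
        · simp only [shiftedPrimeBlock, mem_filter, mem_Ioc] at ha ⊢
          tauto
        · gcongr
          exact Nat.cast_div_le
    _ = C * x * E * ∑ m ∈ Icc 1 z, (1 / 2 : ℝ) ^ cardDistinctFactorsLE z m / m := by
        rw [mul_sum]
        exact sum_congr rfl fun m _ => by ring
    _ ≤ C * x * E * exp ((primeRecipSum z + 1) / 2) := by
        gcongr
        exact sum_half_pow_div_le z
    _ = C * exp (1 / 2) * x * (E * exp (primeRecipSum z / 2)) := by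
        rw [add_div, exp_add]
        ring
    _ = C * exp (1 / 2) * x * exp (-primeRecipSum z) := by
        rw [hE, ← exp_add]
        ring_nf

lemma exists_sum_block_sum_le : ∃ C : ℝ, 0 < C ∧ ∀ z x : ℕ,
    ∑ a ∈ shiftedPrimeBlock z, ∑ m ∈ Icc 1 (x / a),
      (1 / 2 : ℝ) ^ cardDistinctFactorsLE z a * (1 / 2) ^ cardDistinctFactorsLE z m
      ≤ C * x * exp (-primeRecipSum z) := by
  obtain ⟨C, hC, hsmall⟩ := exists_sum_block_sum_small_le
  obtain ⟨C', hC', hlarge⟩ := exists_sum_block_sum_large_le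
  refine ⟨C + C', by positivity, fun z x => ?_⟩
  refine le_trans (le_of_eq ?_) ((add_le_add (hsmall z x) (hlarge z x)).trans_eq (by ring))
  rw [← sum_add_distrib]
  refine sum_congr rfl fun a _ => ?_
  rw [← sum_filter_add_sum_filter_not (Icc 1 (x / a)) (· ≤ z)]
  congr 2
  ext m
  simp only [mem_filter, mem_Icc, mem_Ioc]
  lia

lemma half_pow_cardFactorsLE_mul_le (z : ℕ) {a b : ℕ} (ha : a ≠ 0) (hb : b ≠ 0) :
    (1 / 2 : ℝ) ^ cardFactorsLE z (a * b)
      ≤ (1 / 2) ^ cardDistinctFactorsLE z a * (1 / 2) ^ cardDistinctFactorsLE z b := by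
  rw [cardFactorsLE_mul z ha hb, pow_add]
  gcongr ?_ * ?_ <;>
    exact pow_le_pow_of_le_one (by norm_num) (by norm_num)
      (cardDistinctFactorsLE_le_cardFactorsLE z ‹_›)

/- The threshold `t = 7M/5` separates the typical size `M` of `cardFactorsLE z n` from its size
`2M` on multiples of a shifted prime; it satisfies `t log (4/3) > M/3` and `t log 2 < M`. -/
/-- With `k` the number of prime factors of `n` below `z` and `M = ∑_{p ≤ z} 1 / p`, the threshold
`7 * M / 5` lies between the mean `M` for all `n` and `2 * M` for the multiples of some `p - 1`. -/
lemma one_le_exp_mul_pow_add_exp_mul_pow (M : ℝ) (hM : 0 ≤ M) (k : ℕ) :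
    1 ≤ exp (-(7 * M / 20)) * (4 / 3 : ℝ) ^ k + exp (49 * M / 50) * (1 / 2) ^ k := by
  rcases le_total (7 * M / 5) k with hk | hk
  · have hlog : (1 / 4 : ℝ) ≤ log (4 / 3) :=
      (by norm_num : (1 / 4 : ℝ) ≤ 1 - (4 / 3)⁻¹).trans (one_sub_inv_le_log_of_pos (by norm_num))
    have hpow : (4 / 3 : ℝ) ^ k = exp (k * log (4 / 3)) := by
      rw [exp_nat_mul, exp_log (by norm_num)]
    refine le_add_of_le_of_nonneg ?_ (by positivity)
    rw [hpow, ← exp_add, one_le_exp_iff]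
    nlinarith
  · have hpow : (1 / 2 : ℝ) ^ k = exp (k * -log 2) := by
      rw [exp_nat_mul, exp_neg, exp_log two_pos, one_div]
    refine le_add_of_nonneg_of_le (by positivity) ?_
    rw [hpow, ← exp_add, one_le_exp_iff]
    nlinarith [log_two_lt_d9]

lemma exists_countUpTo_shiftedPrimeBlock_le : ∃ C : ℝ, 0 < C ∧ ∀ z x : ℕ,
    (countUpTo (multiplesOf (shiftedPrimeBlock z)) x : ℝ)
      ≤ C * exp (-(primeRecipSum z / 60)) * x := by
  obtain ⟨C, hC, hpairs⟩ := exists_sum_block_sum_le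
  refine ⟨exp (2 / 3) + C, by positivity, fun z x => ?_⟩
  set M := primeRecipSum z
  have hM0 : 0 ≤ M := sum_nonneg fun _ _ => by positivity
  let S := {n ∈ Icc 1 x | ∃ a ∈ shiftedPrimeBlock z, a ∣ n}
  have hfew : ∑ n ∈ S, (4 / 3 : ℝ) ^ cardFactorsLE z n ≤ exp ((M + 2) / 3) * x :=
    (sum_le_sum_of_subset_of_nonneg (filter_subset _ _) fun _ _ _ => by positivity).trans
      (sum_pow_cardFactorsLE_le z x)
  have hmany : ∑ n ∈ S, (1 / 2 : ℝ) ^ cardFactorsLE z n ≤ C * x * exp (-M) := by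
    refine (sum_filter_exists_dvd_le (fun _ => by positivity)
      (fun a => pos_of_mem_shiftedPrimeBlock) x).trans (le_trans ?_ (hpairs z x))
    exact sum_le_sum fun a ha => sum_le_sum fun m hm => half_pow_cardFactorsLE_mul_le z
      (pos_of_mem_shiftedPrimeBlock ha).ne' (Nat.ne_of_gt (mem_Icc.1 hm).1)
  calc (countUpTo (multiplesOf (shiftedPrimeBlock z)) x : ℝ) = ∑ n ∈ S, 1 := by
        simp only [countUpTo, multiplesOf, S, sum_const, nsmul_one]
        congr
    _ ≤ ∑ n ∈ S, (exp (-(7 * M / 20)) * (4 / 3 : ℝ) ^ cardFactorsLE z n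
          + exp (49 * M / 50) * (1 / 2) ^ cardFactorsLE z n) :=
        sum_le_sum fun n _ => one_le_exp_mul_pow_add_exp_mul_pow M hM0 _
    _ ≤ exp (-(7 * M / 20)) * (exp ((M + 2) / 3) * x)
          + exp (49 * M / 50) * (C * x * exp (-M)) := by
        rw [sum_add_distrib, ← mul_sum, ← mul_sum]
        gcongr
    _ = exp (2 / 3) * exp (-(M / 60)) * x + C * exp (-(M / 50)) * x := by
        rw [show -(M / 60) = -(7 * M / 20) + M / 3 by ring,
          show -(M / 50) = 49 * M / 50 + -M by ring, add_div, exp_add, exp_add, exp_add]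
        ring
    _ ≤ exp (2 / 3) * exp (-(M / 60)) * x + C * exp (-(M / 60)) * x := by
        gcongr
        norm_num
    _ = (exp (2 / 3) + C) * exp (-(M / 60)) * x := by ring

lemma exp_neg_primeRecipSum_two_pow_two_pow_le (j : ℕ) :
    exp (-(primeRecipSum (2 ^ 2 ^ j) / 60)) ≤ exp (1 / 30) * exp (-(log 2 / 60)) ^ j := by
  have hexp : exp (j * log 2 - 1) ≤ exp (primeRecipSum (2 ^ 2 ^ j) + 1) := by
    refine le_trans ?_ (log_le_exp_primeRecipSum (2 ^ 2 ^ j))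
    rw [sub_eq_add_neg, exp_add, exp_nat_mul, exp_log two_pos, Nat.cast_pow, log_pow]
    push_cast
    gcongr
    linarith [exp_neg_one_lt_d9, log_two_gt_d9]
  rw [← exp_nat_mul, ← exp_add, exp_le_exp]
  linarith [exp_le_exp.1 hexp]

lemma exists_mem_Ioc_two_pow_two_pow {J a : ℕ} (ha : 2 ^ 2 ^ J < a) :
    ∃ j ∈ Ico J a, a ∈ Ioc (2 ^ 2 ^ j) ((2 ^ 2 ^ j) ^ 2) := by
  have hlt : ∀ k : ℕ, k < 2 ^ 2 ^ k := fun k =>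
    Nat.lt_two_pow_self.trans (Nat.pow_lt_pow_right one_lt_two Nat.lt_two_pow_self)
  have hmono : Monotone fun k : ℕ => 2 ^ 2 ^ k := fun i j hij =>
    Nat.pow_le_pow_right two_pos (Nat.pow_le_pow_right two_pos hij)
  have hex : ∃ k, a ≤ 2 ^ 2 ^ k := ⟨a, (hlt a).le⟩
  have hfind : J < Nat.find hex := (Nat.lt_find_iff hex J).2 fun k hk =>
    not_le.2 ((hmono hk).trans_lt ha)
  obtain ⟨j, hj⟩ := Nat.exists_eq_succ_of_ne_zero (Nat.ne_of_gt (Nat.zero_le J |>.trans_lt hfind))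
  have hja : 2 ^ 2 ^ j < a := not_le.1 (Nat.find_min hex (hj ▸ Nat.lt_succ_self j))
  refine ⟨j, mem_Ico.2 ⟨Nat.lt_succ_iff.1 (hj ▸ hfind), (hlt j).trans hja⟩, mem_Ioc.2 ⟨hja, ?_⟩⟩
  rw [← pow_mul, ← pow_succ, ← Nat.succ_eq_add_one, ← hj]
  exact Nat.find_spec hex

/-- The shifted primes `p - 1`. -/
def shiftedPrimes : Set ℕ := {a | (a + 1).Prime}

lemma countUpTo_multiplesOf_shiftedPrimes_le (J x : ℕ) :
    countUpTo (multiplesOf (shiftedPrimes ∩ Set.Ici (2 ^ 2 ^ J + 1))) x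
      ≤ ∑ j ∈ Ico J (x + 1), countUpTo (multiplesOf (shiftedPrimeBlock (2 ^ 2 ^ j))) x := by
  classical
  refine (card_le_card fun n hn => ?_).trans card_biUnion_le
  obtain ⟨hnx, a, ⟨hap, haJ⟩, han⟩ := mem_filter.1 hn
  obtain ⟨hn1, hnx'⟩ := mem_Icc.1 hnx
  obtain ⟨j, hj, haj⟩ := exists_mem_Ioc_two_pow_two_pow (Nat.lt_of_succ_le haJ)
  have hjx : j < x + 1 := Nat.lt_succ_of_lt <|
    (mem_Ico.1 hj).2.trans_le ((Nat.le_of_dvd hn1 han).trans hnx')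
  exact mem_biUnion.2 ⟨j, mem_Ico.2 ⟨(mem_Ico.1 hj).1, hjx⟩,
    mem_filter.2 ⟨hnx, a, mem_filter.2 ⟨haj, hap⟩, han⟩⟩

/-- Erdős and Wagstaff. -/
theorem hasThinTails_shiftedPrimes : HasThinTails shiftedPrimes := by
  intro ε hε
  obtain ⟨C, hC, hcard⟩ := exists_countUpTo_shiftedPrimeBlock_le
  set ρ := exp (-(log 2 / 60))
  have hρ1 : ρ < 1 := exp_lt_one_iff.2 (by linarith [log_pos one_lt_two])
  have hpow : Tendsto (fun J : ℕ => C * exp (1 / 30) * (ρ ^ J / (1 - ρ))) atTop (nhds 0) := by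
    simpa using ((tendsto_pow_atTop_nhds_zero_of_lt_one (exp_pos _).le hρ1).div_const
      (1 - ρ)).const_mul (C * exp (1 / 30))
  obtain ⟨J, hJ⟩ := (hpow.eventually_lt_const hε).exists
  refine ⟨2 ^ 2 ^ J + 1, fun x => ?_⟩
  calc (countUpTo (multiplesOf (shiftedPrimes ∩ Set.Ici (2 ^ 2 ^ J + 1))) x : ℝ)
      ≤ ∑ j ∈ Ico J (x + 1),
          (countUpTo (multiplesOf (shiftedPrimeBlock (2 ^ 2 ^ j))) x : ℝ) := by
        exact_mod_cast countUpTo_multiplesOf_shiftedPrimes_le J x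
    _ ≤ ∑ j ∈ Ico J (x + 1), C * (exp (1 / 30) * ρ ^ j) * x := sum_le_sum fun j _ => by
        refine (hcard (2 ^ 2 ^ j) x).trans ?_
        gcongr
        exact exp_neg_primeRecipSum_two_pow_two_pow_le j
    _ = C * exp (1 / 30) * (∑ j ∈ Ico J (x + 1), ρ ^ j) * x := by
        rw [mul_sum, sum_mul]
        exact sum_congr rfl fun j _ => by ring
    _ ≤ C * exp (1 / 30) * (ρ ^ J / (1 - ρ)) * x := by
        gcongr
        exact geom_sum_Ico_le_of_lt_one (exp_pos _).le hρ1
    _ ≤ ε * x := by gcongr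

end ErdosWagstaff

section LinearForms

open Finset

lemma cast_totient_eq_mul_prod (n : ℕ) :
    (n.totient : ℝ) = n * ∏ q ∈ n.primeFactors, (1 - (q : ℝ)⁻¹) := by
  simpa using congrArg (Rat.cast : ℚ → ℝ) (Nat.totient_eq_mul_prod_factors n)

lemma exp_sum_primeFactors_inv_le {n : ℕ} (hn : n ≠ 0) :
    exp (∑ q ∈ n.primeFactors, (q : ℝ)⁻¹) ≤ n / n.totient := by
  have hφ : (0 : ℝ) < n.totient := by exact_mod_cast Nat.totient_pos.2 (Nat.pos_of_ne_zero hn)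
  rw [le_div_iff₀ hφ, cast_totient_eq_mul_prod, mul_left_comm, exp_sum, ← prod_mul_distrib]
  refine mul_le_of_le_one_right n.cast_nonneg (prod_le_one (fun q hq => ?_) fun q _ => ?_)
  · exact mul_nonneg (exp_pos _).le
      (sub_nonneg.2 (inv_le_one_of_one_le₀ (by exact_mod_cast (Nat.pos_of_mem_primeFactors hq))))
  · calc exp (q : ℝ)⁻¹ * (1 - (q : ℝ)⁻¹) ≤ exp (q : ℝ)⁻¹ * exp (-(q : ℝ)⁻¹) := by
          gcongr
          exact one_sub_le_exp_neg _
      _ = 1 := by rw [← exp_add, add_neg_cancel, exp_zero]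

lemma div_totient_le_exp (n : ℕ) :
    (n : ℝ) / n.totient ≤ exp (∑ q ∈ n.primeFactors, ((q : ℝ) - 1)⁻¹) := by
  have hq : ∀ q ∈ n.primeFactors, (1 : ℝ) < q := fun q hq => by
    exact_mod_cast (Nat.prime_of_mem_primeFactors hq).one_lt
  have hprod : 0 < ∏ q ∈ n.primeFactors, (1 - (q : ℝ)⁻¹) :=
    prod_pos fun q h => sub_pos.2 (inv_lt_one_of_one_lt₀ (hq q h))
  rw [cast_totient_eq_mul_prod]
  refine div_le_of_le_mul₀ (by positivity) (exp_pos _).le ?_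
  rw [mul_left_comm, exp_sum, ← prod_mul_distrib]
  refine le_mul_of_one_le_right n.cast_nonneg (Finset.one_le_prod fun q h => ?_)
  have h1 := sub_pos.2 (hq q h)
  calc (1 : ℝ) = (((q : ℝ) - 1)⁻¹ + 1) * (1 - (q : ℝ)⁻¹) := by
        have := (hq q h).trans' one_pos
        field_simp
        ring
    _ ≤ exp ((q : ℝ) - 1)⁻¹ * (1 - (q : ℝ)⁻¹) := by
        gcongr
        · exact (sub_pos.2 (inv_lt_one_of_one_lt₀ (hq q h))).le
        · exact add_one_le_exp _

lemma primeRecipSum_le {n w k : ℕ} (hw : 1 ≤ w) (hn : n < (w + 1) ^ k) :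
    primeRecipSum n ≤ log w + (k + 3) := by
  rw [primeRecipSum, ← sum_filter_add_sum_filter_not _ (· ≤ w)]
  have hsmall : ∑ p ∈ n.primesLE with p ≤ w, (p : ℝ)⁻¹ ≤ 1 + log w := by
    refine le_trans (sum_le_sum_of_subset_of_nonneg (t := Icc 1 w) (fun p hp => ?_)
      fun _ _ _ => by positivity) ?_
    · have hp' := mem_filter.1 hp
      exact mem_Icc.2 ⟨(Nat.prime_of_mem_primesLE hp'.1).pos, hp'.2⟩
    · simpa [harmonic_eq_sum_Icc] using harmonic_le_one_add_log w
  have hlarge : ∑ p ∈ n.primesLE with ¬p ≤ w, (p : ℝ)⁻¹ ≤ k + 2 :=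
    sum_inv_le_of_lt_pow hw fun p hp => by
      obtain ⟨hp, hwp⟩ := mem_filter.1 hp
      obtain ⟨hpn, hp⟩ := Nat.mem_primesLE.1 hp
      exact ⟨hp, not_le.1 hwp, hpn.trans_lt hn⟩
  linarith

lemma card_primeFactors_le_log {n : ℕ} (hn : n ≠ 0) : #n.primeFactors ≤ Nat.log 2 n := by
  refine Nat.le_log_of_pow_le one_lt_two (le_trans ?_ (Nat.le_of_dvd (Nat.pos_of_ne_zero hn)
    (Nat.prod_primeFactors_dvd n)))
  exact pow_card_le_prod _ _ _ fun q hq => (Nat.prime_of_mem_primeFactors hq).two_le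

/-- The primes beyond `#n.primeFactors` contribute at most `1`. -/
lemma sum_primeFactors_inv_pred_le (n : ℕ) :
    ∑ q ∈ n.primeFactors, ((q : ℝ) - 1)⁻¹ ≤ primeRecipSum #n.primeFactors + 2 := by
  set z := #n.primeFactors
  rw [← sum_filter_add_sum_filter_not _ (· ≤ z)]
  have hsmall : ∑ q ∈ n.primeFactors with q ≤ z, ((q : ℝ) - 1)⁻¹ ≤ primeRecipSum z + 1 := by
    refine le_trans (sum_le_sum_of_subset_of_nonneg (fun q hq => ?_) fun q hq _ => ?_)
      (sum_primesLE_inv_pred_le z)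
    · obtain ⟨hq, hqz⟩ := mem_filter.1 hq
      exact Nat.mem_primesLE.2 ⟨hqz, Nat.prime_of_mem_primeFactors hq⟩
    · refine inv_nonneg.2 (sub_nonneg.2 ?_)
      exact_mod_cast (Nat.prime_of_mem_primesLE hq).one_le
  have hlarge : ∑ q ∈ n.primeFactors with ¬q ≤ z, ((q : ℝ) - 1)⁻¹ ≤ 1 := by
    have hterm : ∀ q ∈ {q ∈ n.primeFactors | ¬q ≤ z}, ((q : ℝ) - 1)⁻¹ ≤ (z : ℝ)⁻¹ := fun q hq => by
      obtain ⟨hq, hzq⟩ := mem_filter.1 hq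
      have hz : (0 : ℝ) < z := by exact_mod_cast card_pos.2 ⟨q, hq⟩
      refine inv_anti₀ hz (le_sub_iff_add_le.2 ?_)
      exact_mod_cast not_le.1 hzq
    refine (sum_le_card_nsmul _ _ _ hterm).trans ?_
    rw [nsmul_eq_mul]
    calc (#{q ∈ n.primeFactors | ¬q ≤ z} : ℝ) * (z : ℝ)⁻¹ ≤ z * (z : ℝ)⁻¹ := by
          gcongr
          exact card_filter_le _ _
      _ ≤ 1 := mul_inv_le_one
  linarith

lemma exists_div_totient_pow_le {k : ℕ} (hk : k ≠ 0) : ∃ C : ℝ, 0 < C ∧ ∀ n : ℕ, n ≠ 0 →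
    ((n : ℝ) / n.totient) ^ k ≤ C * (Nat.log 2 n + 1) := by
  refine ⟨exp (k + 5) ^ k, by positivity, fun n hn => ?_⟩
  set z := #n.primeFactors
  set w := Nat.nthRoot k (z + 1)
  have hw : 1 ≤ w := (Nat.le_nthRoot_iff hk).2 (by simp)
  have hz : z < (w + 1) ^ k := (Nat.lt_succ_self z).trans (Nat.lt_pow_nthRoot_add_one hk _)
  have hexp : (n : ℝ) / n.totient ≤ w * exp (k + 5) := by
    calc (n : ℝ) / n.totient ≤ exp (∑ q ∈ n.primeFactors, ((q : ℝ) - 1)⁻¹) := div_totient_le_exp n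
      _ ≤ exp (log w + (k + 5)) := by
          gcongr
          linarith [sum_primeFactors_inv_pred_le n, primeRecipSum_le hw hz]
      _ = w * exp (k + 5) := by rw [exp_add, exp_log (by exact_mod_cast hw)]
  calc ((n : ℝ) / n.totient) ^ k ≤ (w * exp (k + 5)) ^ k := by gcongr
    _ = exp (k + 5) ^ k * (w ^ k : ℕ) := by push_cast; ring
    _ ≤ exp (k + 5) ^ k * (Nat.log 2 n + 1 : ℕ) := by
        gcongr
        exact (Nat.pow_nthRoot_le (.inl hk)).trans (Nat.succ_le_succ (card_primeFactors_le_log hn))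
    _ = exp (k + 5) ^ k * (Nat.log 2 n + 1) := by push_cast; rfl

lemma exp_neg_sum_primesLE_not_dvd_le {i E : ℕ} (hi : i ≠ 0) (hE : E ≠ 0) :
    exp (-∑ q ∈ (2 ^ i).primesLE with ¬q ∣ E, (q : ℝ)⁻¹) ≤ 4 * (E / E.totient) / i := by
  have hi' : (0 : ℝ) < i := by exact_mod_cast Nat.pos_of_ne_zero hi
  have hsplit : primeRecipSum (2 ^ i) ≤
      ∑ q ∈ (2 ^ i).primesLE with ¬q ∣ E, (q : ℝ)⁻¹ + ∑ q ∈ E.primeFactors, (q : ℝ)⁻¹ := by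
    rw [primeRecipSum, ← sum_filter_add_sum_filter_not _ (¬· ∣ E)]
    refine add_le_add_right (sum_le_sum_of_subset_of_nonneg (fun q hq => ?_)
      fun _ _ _ => by positivity) _
    obtain ⟨hq, hqE⟩ := mem_filter.1 hq
    exact Nat.mem_primeFactors.2 ⟨Nat.prime_of_mem_primesLE hq, not_not.1 hqE, hE⟩
  have hmertens : (i : ℝ) / 4 ≤ exp (primeRecipSum (2 ^ i)) := by
    have h := log_le_exp_primeRecipSum (2 ^ i)
    rw [exp_add, Nat.cast_pow, log_pow, Nat.cast_ofNat] at h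
    nlinarith [exp_one_lt_d9, log_two_gt_d9, exp_pos (primeRecipSum (2 ^ i))]
  rw [le_div_iff₀ hi', exp_neg, ← div_eq_inv_mul, div_le_iff₀ (exp_pos _)]
  calc (i : ℝ) ≤ 4 * exp (primeRecipSum (2 ^ i)) := by linarith
    _ ≤ 4 * exp (∑ q ∈ E.primeFactors, (q : ℝ)⁻¹ +
          ∑ q ∈ (2 ^ i).primesLE with ¬q ∣ E, (q : ℝ)⁻¹) := by
        gcongr
        linarith
    _ = 4 * exp (∑ q ∈ E.primeFactors, (q : ℝ)⁻¹) *
          exp (∑ q ∈ (2 ^ i).primesLE with ¬q ∣ E, (q : ℝ)⁻¹) := by rw [exp_add, mul_assoc]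
    _ ≤ _ := by
        gcongr
        exact exp_sum_primeFactors_inv_le hE

lemma sum_range_ite_exists_dvd_mul_add {q : ℕ} (hq : q.Prime) {s : Finset ℕ} {d : ℕ}
    (hroot : ∀ a ∈ s, ¬q ∣ a)
    (hsep : ∀ v, ∀ a ∈ s, ∀ b ∈ s, q ∣ a * v + d → q ∣ b * v + d → a = b) :
    ∑ v ∈ range q, (if ∃ a ∈ s, q ∣ a * v + d then (1 : ℝ) else 0) = #s := by
  have hsplit : ∀ v, (if ∃ a ∈ s, q ∣ a * v + d then (1 : ℝ) else 0)
      = ∑ a ∈ s, if q ∣ a * v + d then (1 : ℝ) else 0 := fun v => by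
    by_cases h : ∃ a ∈ s, q ∣ a * v + d
    · obtain ⟨a, ha, hqa⟩ := h
      rw [sum_eq_single_of_mem a ha fun b hb hba => if_neg fun hqb =>
        hba (hsep v b hb a ha hqb hqa), if_pos hqa, if_pos ⟨a, ha, hqa⟩]
    · rw [sum_eq_zero fun a ha => if_neg fun hqa => h ⟨a, ha, hqa⟩, if_neg h]
  simp_rw [hsplit]
  rw [sum_comm, sum_congr rfl fun a ha => sum_range_ite_dvd_mul_add hq (hroot a ha) d 1]
  simp

lemma card_prime_linearForms_le_sum_prod {P s : Finset ℕ} {d N B : ℕ}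
    (hP : ∀ q ∈ P, q.Prime ∧ q ≤ B) :
    (#{v ∈ range N | ∀ a ∈ s, (a * v + d).Prime ∧ B < a * v + d} : ℝ) ≤
      ∑ v ∈ range N, ∏ q ∈ P, (1 - if ∃ a ∈ s, q ∣ a * v + d then (1 : ℝ) else 0) := by
  have hprod : ∀ v, (∀ a ∈ s, (a * v + d).Prime ∧ B < a * v + d) →
      ∏ q ∈ P, (1 - if ∃ a ∈ s, q ∣ a * v + d then (1 : ℝ) else 0) = 1 := fun v hv =>
    prod_eq_one fun q hq => by
      have hqv : ¬∃ a ∈ s, q ∣ a * v + d := fun ⟨a, ha, hqa⟩ => by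
        have := (Nat.prime_dvd_prime_iff_eq (hP q hq).1 (hv a ha).1).1 hqa
        have := (hv a ha).2
        have := (hP q hq).2
        lia
      simp [hqv]
  calc (#{v ∈ range N | ∀ a ∈ s, (a * v + d).Prime ∧ B < a * v + d} : ℝ)
      = ∑ v ∈ range N with ∀ a ∈ s, (a * v + d).Prime ∧ B < a * v + d,
          ∏ q ∈ P, (1 - if ∃ a ∈ s, q ∣ a * v + d then (1 : ℝ) else 0) := by
        rw [sum_congr rfl fun v hv => hprod v (mem_filter.1 hv).2]
        simp
    _ ≤ _ := sum_le_sum_of_subset_of_nonneg (filter_subset _ _) fun v _ _ =>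
        prod_nonneg fun q _ => by split_ifs <;> simp

lemma exists_card_prime_linearForms_le (κ : ℕ) : ∃ C : ℝ, 0 < C ∧
    ∀ {s : Finset ℕ} {d i N E : ℕ}, #s = κ → i ≠ 0 → 2 ^ i ≤ N → E ≠ 0 →
      (∀ q : ℕ, q.Prime → ¬q ∣ E → ∀ a ∈ s, ¬q ∣ a) →
      (∀ q : ℕ, q.Prime → ¬q ∣ E →
        ∀ v, ∀ a ∈ s, ∀ b ∈ s, q ∣ a * v + d → q ∣ b * v + d → a = b) →
      (#{v ∈ range N | ∀ a ∈ s, (a * v + d).Prime ∧ 2 ^ i < a * v + d} : ℝ)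
        ≤ C * N * (E / E.totient / i) ^ κ := by
  obtain ⟨C, hC, hsieve⟩ := exists_sum_range_prod_one_sub_le κ
  refine ⟨C * 4 ^ κ, by positivity, fun {s d i N E} hs hi hN hE hroot hsep => ?_⟩
  set P : Finset ℕ := {q ∈ (2 ^ i).primesLE | ¬q ∣ E}
  have hP : ∀ q ∈ P, q.Prime ∧ q ≤ 2 ^ i ∧ ¬q ∣ E := fun q hq => by
    obtain ⟨hq, hqE⟩ := mem_filter.1 hq
    exact ⟨Nat.prime_of_mem_primesLE hq, (Nat.mem_primesLE.1 hq).1, hqE⟩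
  set u : ℕ → ℕ → ℝ := fun q v => if ∃ a ∈ s, q ∣ a * v + d then 1 else 0
  have hu : ∀ q ∈ P, ∑ v ∈ range q, u q v = κ := fun q hq =>
    have ⟨hqp, _, hqE⟩ := hP q hq
    (sum_range_ite_exists_dvd_mul_add hqp (hroot q hqp hqE) (hsep q hqp hqE)).trans (by rw [hs])
  calc (#{v ∈ range N | ∀ a ∈ s, (a * v + d).Prime ∧ 2 ^ i < a * v + d} : ℝ)
      ≤ ∑ v ∈ range N, ∏ q ∈ P, (1 - u q v) :=
        card_prime_linearForms_le_sum_prod fun q hq => ⟨(hP q hq).1, (hP q hq).2.1⟩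
    _ ≤ C * N * exp (-∑ q ∈ P, (∑ a ∈ range q, u q a) / q) :=
        hsieve N P u (fun q hq => Nat.mem_primesLE.2 ⟨(hP q hq).2.1.trans hN, (hP q hq).1⟩)
          (fun q v => by simp only [u, mul_add, add_right_comm _ _ d, Nat.dvd_add_left,
            dvd_mul_left])
          (fun q v => by simp only [u]; split_ifs <;> simp) fun q hq => (hu q hq).le
    _ = C * N * exp (-∑ q ∈ P, (q : ℝ)⁻¹) ^ κ := by
        rw [sum_congr rfl fun q hq => by rw [hu q hq, div_eq_mul_inv], ← mul_sum, ← mul_neg,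
          exp_nat_mul]
    _ ≤ C * N * (4 * (E / E.totient) / i) ^ κ := by
        gcongr
        exact exp_neg_sum_primesLE_not_dvd_le hi hE
    _ = C * 4 ^ κ * N * (E / E.totient / i) ^ κ := by ring

/-- The product of the leading coefficients and of the resultants of the linear forms `a X + 1`,
`a ∈ s`: a prime not dividing it has exactly `#s` roots of `∏ a ∈ s, (a X + 1)`. -/
def formsDiscriminant (s : Finset ℕ) : ℕ := (∏ a ∈ s, a) * ∏ p ∈ s.offDiag, Nat.dist p.1 p.2

lemma formsDiscriminant_ne_zero {s : Finset ℕ} (hs : ∀ a ∈ s, a ≠ 0) :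
    formsDiscriminant s ≠ 0 :=
  mul_ne_zero (prod_ne_zero_iff.2 hs) (prod_ne_zero_iff.2 fun _ hp =>
    (Nat.dist_pos_of_ne (mem_offDiag.1 hp).2.2).ne')

lemma formsDiscriminant_le_pow {s : Finset ℕ} {A : ℕ} (hs : ∀ a ∈ s, a ≤ A) :
    formsDiscriminant s ≤ A ^ (#s) ^ 2 := by
  have hdist : ∀ p ∈ s.offDiag, Nat.dist p.1 p.2 ≤ A := fun p hp => by
    obtain ⟨h1, h2, -⟩ := mem_offDiag.1 hp
    have := hs _ h1
    have := hs _ h2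
    simp only [Nat.dist]
    lia
  calc formsDiscriminant s ≤ A ^ #s * A ^ #s.offDiag :=
        Nat.mul_le_mul (prod_le_pow_card _ _ _ hs) (prod_le_pow_card _ _ _ hdist)
    _ = A ^ (#s) ^ 2 := by
        rw [← pow_add, offDiag_card, Nat.add_sub_cancel' (Nat.le_mul_self _), sq]

lemma eq_of_dvd_mul_add_one {s : Finset ℕ} {q a b v : ℕ} (hq : q.Prime)
    (hqs : ¬q ∣ formsDiscriminant s) (ha : a ∈ s) (hb : b ∈ s) (hqa : q ∣ a * v + 1)
    (hqb : q ∣ b * v + 1) : a = b := by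
  by_contra hab
  have hqv : ¬q ∣ v := fun h => hq.not_dvd_one ((Nat.dvd_add_right (h.mul_left a)).1 hqa)
  have hdist : q ∣ Nat.dist a b * v := by
    rw [← Nat.dist_mul_right, ← Nat.dist_add_add_right _ 1]
    exact (Nat.dvd_sub hqa hqb).add (Nat.dvd_sub hqb hqa)
  exact hqs ((((hq.dvd_mul.1 hdist).resolve_right hqv).trans
    (dvd_prod_of_mem (fun p : ℕ × ℕ => Nat.dist p.1 p.2)
      (mem_offDiag.2 ⟨ha, hb, hab⟩ : (a, b) ∈ s.offDiag))).mul_left _)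

lemma exists_card_prime_mul_add_one_le (κ : ℕ) : ∃ C : ℝ, 0 < C ∧ ∀ {s : Finset ℕ} {i N : ℕ},
    #s = κ → (∀ a ∈ s, a ≠ 0) → i ≠ 0 → 2 ^ i ≤ N →
      (#{v ∈ range N | 2 ^ i < v ∧ ∀ a ∈ s, (a * v + 1).Prime} : ℝ)
        ≤ C * N * (formsDiscriminant s / (formsDiscriminant s).totient / i) ^ κ := by
  obtain ⟨C, hC, hcard⟩ := exists_card_prime_linearForms_le κ
  refine ⟨C, hC, fun {s i N} hs hs₀ hi hN => le_trans ?_ (hcard hs hi hN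
    (formsDiscriminant_ne_zero hs₀) (fun q _ hqs a ha hqa => hqs ?_)
    fun q hq hqs v a ha b hb => eq_of_dvd_mul_add_one hq hqs ha hb)⟩
  · gcongr with v
    exact fun ⟨hv, h⟩ a ha => ⟨h a ha, (hv.trans_le
      (Nat.le_mul_of_pos_left v (Nat.pos_of_ne_zero (hs₀ a ha)))).trans (Nat.lt_succ_self _)⟩
  · exact (hqa.trans (dvd_prod_of_mem id ha)).mul_right _

end LinearForms

section PrimeBlocks

open Finset

lemma sum_range_pow_eq {M : Type*} [AddCommMonoid M] (f : ℕ → M) {b I J : ℕ} (hb : 1 ≤ b)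
    (hIJ : I ≤ J) :
    ∑ n ∈ range (b ^ J), f n =
      ∑ n ∈ range (b ^ I), f n + ∑ i ∈ Ico I J, ∑ n ∈ Ico (b ^ i) (b ^ (i + 1)), f n := by
  induction J, hIJ using Nat.le_induction with
  | base => simp
  | succ J hIJ ih =>
    rw [sum_Ico_succ_top hIJ, ← add_assoc, ← ih,
      sum_range_add_sum_Ico _ (Nat.pow_le_pow_right hb J.le_succ)]

lemma summable_of_summable_sum_Ico_pow {f : ℕ → ℝ} (hf : ∀ n, 0 ≤ f n) {b : ℕ} (hb : 1 < b)
    (h : Summable fun i => ∑ n ∈ Ico (b ^ i) (b ^ (i + 1)), f n) : Summable f := by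
  refine summable_of_sum_range_le (c := ∑ n ∈ range (b ^ 0), f n +
    ∑' i, ∑ n ∈ Ico (b ^ i) (b ^ (i + 1)), f n) hf fun N => ?_
  calc ∑ n ∈ range N, f n ≤ ∑ n ∈ range (b ^ N), f n :=
        sum_le_sum_of_subset_of_nonneg (range_subset_range.2 (Nat.lt_pow_self hb).le)
          fun n _ _ => hf n
    _ ≤ _ := by
        rw [sum_range_pow_eq f hb.le N.zero_le]
        gcongr
        exact h.sum_le_tsum _ fun i _ => sum_nonneg fun n _ => hf n

lemma inv_one_sub_exp_neg_le {y : ℝ} (hy : 0 < y) : (1 - exp (-y))⁻¹ ≤ 1 + y⁻¹ := by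
  have hexp : exp (-y) ≤ (1 + y)⁻¹ := by
    rw [exp_neg]
    exact inv_anti₀ (by positivity) (by linarith [add_one_le_exp y])
  have hlt : (1 + y)⁻¹ < 1 := inv_lt_one_of_one_lt₀ (by linarith)
  calc (1 - exp (-y))⁻¹ ≤ (1 - (1 + y)⁻¹)⁻¹ := inv_anti₀ (by linarith) (by linarith)
    _ = 1 + y⁻¹ := by
        rw [show 1 - (1 + y)⁻¹ = y / (1 + y) by field_simp; ring, inv_div, add_div,
          div_self hy.ne', one_div, add_comm]

lemma sum_Ico_exp_neg_pow_le {y : ℝ} (hy : 0 < y) (I J : ℕ) :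
    ∑ i ∈ Ico I J, exp (-y) ^ i ≤ 1 + y⁻¹ := by
  have hlt : exp (-y) < 1 := exp_lt_one_iff.2 (neg_lt_zero.2 hy)
  refine (geom_sum_Ico_le_of_lt_one (exp_pos _).le hlt).trans
    (le_trans ?_ (inv_one_sub_exp_neg_le hy))
  rw [← one_div]
  exact div_le_div_of_nonneg_right (pow_le_one₀ (exp_pos _).le hlt.le) (sub_pos.2 hlt).le

lemma sum_Ico_pow_div_rpow_le {f : ℕ → ℝ} (hf : ∀ n, 0 ≤ f n) {b i : ℕ} (hb : 0 < b) {x : ℝ}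
    (hx : 0 ≤ x) :
    ∑ n ∈ Ico (b ^ i) (b ^ (i + 1)), f n / (n : ℝ) ^ x ≤
      (∑ n ∈ Ico (b ^ i) (b ^ (i + 1)), f n) / (b : ℝ) ^ i * exp (-((x - 1) * log b)) ^ i := by
  have hb' : (0 : ℝ) < b := by exact_mod_cast hb
  have hpow : ((b : ℝ) ^ i) ^ x = (b : ℝ) ^ i * exp ((x - 1) * log b) ^ i := by
    rw [rpow_def_of_pos (by positivity), ← exp_nat_mul, log_pow, ← exp_log (pow_pos hb' i),
      ← exp_add, log_pow]
    ring_nf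
  calc ∑ n ∈ Ico (b ^ i) (b ^ (i + 1)), f n / (n : ℝ) ^ x
      ≤ ∑ n ∈ Ico (b ^ i) (b ^ (i + 1)), f n / ((b : ℝ) ^ i) ^ x := sum_le_sum fun n hn => by
        have hbn : (b : ℝ) ^ i ≤ n := by exact_mod_cast (mem_Ico.1 hn).1
        have := hf n
        gcongr
    _ = _ := by
        rw [← sum_div, hpow, exp_neg, inv_pow, div_mul_eq_div_div, div_eq_mul_inv (_ / _)]

lemma tsum_div_rpow_le {f : ℕ → ℝ} (hf : ∀ n, 0 ≤ f n) {b I : ℕ} (hb : 1 < b) {c : ℝ} (hc : 0 ≤ c)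
    (hblock : ∀ i ≥ I, ∑ n ∈ Ico (b ^ i) (b ^ (i + 1)), f n ≤ c * log b * (b : ℝ) ^ i) {x : ℝ}
    (hx : 1 < x) :
    ∑' n, f n / (n : ℝ) ^ x ≤ ∑ n ∈ range (b ^ I), f n + c * log b + c / (x - 1) := by
  have hb1 : (1 : ℝ) < b := by exact_mod_cast hb
  have hlogb : 0 < log b := log_pos hb1
  have hy : 0 < (x - 1) * log b := mul_pos (sub_pos.2 hx) hlogb
  have hterm : ∀ n, 0 ≤ f n / (n : ℝ) ^ x := fun n => div_nonneg (hf n) (by positivity)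
  refine Real.tsum_le_of_sum_range_le hterm fun N => ?_
  set J := max I N
  calc ∑ n ∈ range N, f n / (n : ℝ) ^ x
      ≤ ∑ n ∈ range (b ^ J), f n / (n : ℝ) ^ x :=
        sum_le_sum_of_subset_of_nonneg (range_subset_range.2 ((le_max_right I N).trans
          (Nat.lt_pow_self hb).le)) fun n _ _ => hterm n
    _ = ∑ n ∈ range (b ^ I), f n / (n : ℝ) ^ x +
          ∑ i ∈ Ico I J, ∑ n ∈ Ico (b ^ i) (b ^ (i + 1)), f n / (n : ℝ) ^ x :=
        sum_range_pow_eq _ hb.le (le_max_left I N)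
    _ ≤ ∑ n ∈ range (b ^ I), f n + ∑ i ∈ Ico I J, c * log b * exp (-((x - 1) * log b)) ^ i := by
        gcongr with n hn i hi
        · rcases n.eq_zero_or_pos with rfl | hn
          · simpa [zero_rpow (one_pos.trans hx).ne'] using hf 0
          · exact div_le_self (hf n) (one_le_rpow (by exact_mod_cast hn) (one_pos.trans hx).le)
        · refine (sum_Ico_pow_div_rpow_le hf (one_pos.trans hb) (one_pos.trans hx).le).trans ?_
          gcongr
          exact div_le_of_le_mul₀ (by positivity) (by positivity) (hblock i (mem_Ico.1 hi).1)
    _ ≤ ∑ n ∈ range (b ^ I), f n + c * log b * (1 + ((x - 1) * log b)⁻¹) := by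
        rw [← mul_sum]
        gcongr
        exact sum_Ico_exp_neg_pow_le hy I J
    _ = _ := by
        have := (sub_pos.2 hx).ne'
        field_simp
        ring

/-- If the sums over `[b ^ i, b ^ (i + 1))` were eventually smaller, the Dirichlet series would
have too small a pole at `1`. -/
lemma frequently_le_sum_Ico_pow {f : ℕ → ℝ} (hf : ∀ n, 0 ≤ f n) {b : ℕ} (hb : 1 < b) {c c' C : ℝ}
    (hc' : 0 ≤ c') (hcc' : c' < c)
    (hpole : ∀ x ∈ Set.Ioc (1 : ℝ) 2, c / (x - 1) - C ≤ ∑' n, f n / (n : ℝ) ^ x) :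
    ∃ᶠ i in atTop, c' * log b * (b : ℝ) ^ i ≤ ∑ n ∈ Ico (b ^ i) (b ^ (i + 1)), f n := by
  by_contra hcon
  obtain ⟨I, hI⟩ := eventually_atTop.1 (not_frequently.1 hcon)
  set K := ∑ n ∈ range (b ^ I), f n + c' * log b + C
  have hbound : ∀ x ∈ Set.Ioc (1 : ℝ) 2, c - c' ≤ K * (x - 1) := fun x hx => by
    have h := (hpole x hx).trans
      (tsum_div_rpow_le hf hb hc' (fun i hi => (not_le.1 (hI i hi)).le) hx.1)
    rw [← div_le_iff₀ (sub_pos.2 hx.1), sub_div]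
    linarith
  have hlim : Tendsto (fun x : ℝ => K * (x - 1)) (nhdsWithin 1 (Set.Ioi 1)) (nhds 0) := by
    refine tendsto_nhdsWithin_of_tendsto_nhds (Continuous.tendsto' (by fun_prop) _ _ (by simp))
  have := ge_of_tendsto hlim (eventually_of_mem (Ioc_mem_nhdsGT one_lt_two) hbound)
  linarith

/-- The primes of `[16 ^ i, 16 ^ (i + 1))` that are congruent to `c` modulo `M`. The base is
`16 = 2 * 8` since divisors of `p - 1` will be split into those below `2 ^ (i + 4)` and those with
cofactor below `8 ^ i`. -/
def primeBlock (M c i : ℕ) : Finset ℕ := {p ∈ Ico (16 ^ i) (16 ^ (i + 1)) | p.Prime ∧ p ≡ c [MOD M]}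

open ArithmeticFunction.vonMangoldt in
lemma exists_residueClass_prime_pole {M c : ℕ} (hM : M ≠ 0) (hc : c.Coprime M) :
    ∃ C : ℝ, ∀ x ∈ Set.Ioc (1 : ℝ) 2, (M.totient : ℝ)⁻¹ / (x - 1) - C ≤
      ∑' n : ℕ, (if n.Prime ∧ n ≡ c [MOD M] then log n else 0) / (n : ℝ) ^ x := by
  have : NeZero M := ⟨hM⟩
  obtain ⟨C, hC⟩ := LSeries_residueClass_lower_bound ((ZMod.isUnit_iff_coprime c M).2 hc)
  have hsummable := summable_residueClass_non_primes_div (a := (c : ZMod M))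
  set R := residueClass (c : ZMod M)
  set Q : ℕ → ℝ := fun n => if n.Prime then 0 else R n
  have hQ : ∀ n, 0 ≤ Q n := fun n => by
    dsimp only [Q]
    split_ifs
    exacts [le_rfl, residueClass_nonneg _ n]
  refine ⟨C + ∑' n, Q n / n, fun x hx => ?_⟩
  have hsplit : ∀ n : ℕ, R n / (n : ℝ) ^ x =
      (if n.Prime ∧ n ≡ c [MOD M] then log n else 0) / (n : ℝ) ^ x + Q n / (n : ℝ) ^ x := by
    intro n
    rw [← add_div]
    congr 1
    by_cases hn : n.Prime
    · simp [Q, R, hn, residueClass, Set.indicator_apply, ZMod.natCast_eq_natCast_iff,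
        ArithmeticFunction.vonMangoldt_apply_prime]
    · simp [Q, hn]
  have hQle : ∀ n : ℕ, Q n / (n : ℝ) ^ x ≤ Q n / n := fun n => by
    rcases n.eq_zero_or_pos with rfl | hn
    · simp [zero_rpow (one_pos.trans hx.1).ne']
    · exact div_le_div_of_nonneg_left (hQ n) (by positivity)
        (self_le_rpow_of_one_le (by exact_mod_cast hn) hx.1.le)
  have hQx : Summable fun n : ℕ => Q n / (n : ℝ) ^ x :=
    hsummable.of_nonneg_of_le (fun n => div_nonneg (hQ n) (by positivity)) hQle
  have hlower := hC hx
  simp only [hsplit] at hlower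
  by_cases hP : Summable fun n : ℕ =>
      (if n.Prime ∧ n ≡ c [MOD M] then log n else 0) / (n : ℝ) ^ x
  · rw [hP.tsum_add hQx] at hlower
    linarith [hQx.tsum_le_tsum hQle hsummable]
  · rw [tsum_eq_zero_of_not_summable fun h => hP (by simpa using h.sub hQx)] at hlower
    rw [tsum_eq_zero_of_not_summable hP]
    have : 0 ≤ ∑' n, Q n / n := tsum_nonneg fun n => div_nonneg (hQ n) n.cast_nonneg
    linarith

lemma frequently_le_card_primeBlock {M c : ℕ} (hM : M ≠ 0) (hc : c.Coprime M) :
    ∃ᶠ i in atTop, (16 : ℝ) ^ i / (2 * M.totient * (i + 1)) ≤ #(primeBlock M c i) := by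
  obtain ⟨C, hC⟩ := exists_residueClass_prime_pole hM hc
  have hφ : (0 : ℝ) < M.totient := by exact_mod_cast Nat.totient_pos.2 hM.bot_lt
  have hlog : 0 < log 16 := log_pos (by norm_num)
  refine (frequently_le_sum_Ico_pow (b := 16) (c' := (M.totient : ℝ)⁻¹ / 2)
    (fun n => ?_) (by norm_num) (by positivity) (half_lt_self (by positivity)) hC).mono
    fun i hi => ?_
  · split_ifs
    exacts [log_natCast_nonneg n, le_rfl]
  have hsum : ∑ n ∈ Ico (16 ^ i) (16 ^ (i + 1)), (if n.Prime ∧ n ≡ c [MOD M] then log n else 0) ≤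
      #(primeBlock M c i) * ((i + 1) * log 16) := by
    rw [← sum_filter, ← nsmul_eq_mul]
    refine sum_le_card_nsmul _ _ _ fun p hp => ?_
    obtain ⟨hp, hprime, -⟩ := mem_filter.1 hp
    have hle : (p : ℝ) ≤ 16 ^ (i + 1) := by exact_mod_cast (mem_Ico.1 hp).2.le
    calc log p ≤ log (16 ^ (i + 1)) := log_le_log (by exact_mod_cast hprime.pos) hle
      _ = (i + 1) * log 16 := by rw [log_pow, Nat.cast_add_one]
  rw [div_le_iff₀ (by positivity)]
  refine le_of_mul_le_mul_right ?_ (div_pos hlog (mul_pos two_pos hφ))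
  calc (16 : ℝ) ^ i * (log 16 / (2 * M.totient))
      = (M.totient : ℝ)⁻¹ / 2 * log (16 : ℕ) * ((16 : ℕ) : ℝ) ^ i := by
        push_cast
        ring
    _ ≤ #(primeBlock M c i) * ((i + 1) * log 16) := hi.trans hsum
    _ = _ := by field_simp

lemma two_pow_le_sixteen_pow_div {M i : ℕ} (hM : M ≠ 0) (hMi : M ≤ 8 ^ i) :
    2 ^ i ≤ 16 ^ (i + 1) / M + 1 := by
  refine ((Nat.le_div_iff_mul_le hM.bot_lt).2 ?_).trans (Nat.le_succ _)
  calc 2 ^ i * M ≤ 2 ^ i * 8 ^ i := Nat.mul_le_mul_left _ hMi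
    _ ≤ 16 ^ (i + 1) := by simpa [← mul_pow] using Nat.pow_le_pow_right (by norm_num) i.le_succ

lemma cast_sixteen_pow_div_le {M i : ℕ} (hM : M ≠ 0) (hMi : M ≤ 8 ^ i) :
    ((16 ^ (i + 1) / M + 1 : ℕ) : ℝ) ≤ 32 * 16 ^ i / M := by
  have hdiv : ((16 ^ (i + 1) / M : ℕ) : ℝ) ≤ 16 ^ (i + 1) / M := by
    exact_mod_cast Nat.cast_div_le (α := ℝ) (m := 16 ^ (i + 1)) (n := M)
  have hone : (1 : ℝ) ≤ 16 ^ i / M := by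
    rw [one_le_div (by exact_mod_cast hM.bot_lt)]
    exact_mod_cast hMi.trans (Nat.pow_le_pow_left (by norm_num) i)
  calc ((16 ^ (i + 1) / M + 1 : ℕ) : ℝ) = (16 ^ (i + 1) / M : ℕ) + 1 := Nat.cast_add_one _
    _ ≤ 16 ^ (i + 1) / M + 16 * (16 ^ i / M) := by linarith
    _ = _ := by ring

lemma exists_card_primeBlock_le : ∃ C : ℝ, 0 < C ∧ ∀ {M i : ℕ} (c : ℕ), M ≠ 0 → i ≠ 0 →
    M ≤ 8 ^ i → (#(primeBlock M c i) : ℝ) ≤ C * 16 ^ i / (M.totient * i) := by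
  obtain ⟨C, hC, hcard⟩ := exists_card_prime_linearForms_le 1
  refine ⟨32 * C, by positivity, fun {M i} c hM hi hMi => ?_⟩
  set N := 16 ^ (i + 1) / M + 1
  have hmaps : Set.MapsTo (· / M) (primeBlock M c i : Set ℕ)
      ({v ∈ range N | ∀ a ∈ ({M} : Finset ℕ), (a * v + c % M).Prime ∧ 2 ^ i < a * v + c % M} :
        Finset ℕ) := by
    intro p hp
    obtain ⟨hpi, hprime, hmod⟩ := mem_filter.1 (mem_coe.1 hp)
    have hp_eq : M * (p / M) + c % M = p := by rw [← hmod, Nat.div_add_mod]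
    obtain ⟨hlow, hup⟩ := mem_Ico.1 hpi
    simp only [coe_filter, mem_range, mem_singleton, forall_eq, Set.mem_ofPred_eq, hp_eq]
    exact ⟨Nat.lt_succ_of_le (Nat.div_le_div_right hup.le), hprime,
      (Nat.pow_lt_pow_left (by norm_num) hi).trans_le hlow⟩
  have hinj : Set.InjOn (· / M) (primeBlock M c i : Set ℕ) := by
    intro p hp q hq hpq
    have hp := (mem_filter.1 (mem_coe.1 hp)).2.2
    have hq := (mem_filter.1 (mem_coe.1 hq)).2.2
    rw [← Nat.div_add_mod p M, ← Nat.div_add_mod q M, hp.trans hq.symm]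
    exact congrArg (M * · + q % M) hpq
  calc (#(primeBlock M c i) : ℝ) ≤ C * N * (M / M.totient / i) ^ 1 := by
        refine le_trans (by exact_mod_cast card_le_card_of_injOn _ hmaps hinj)
          (hcard (card_singleton M) hi (two_pow_le_sixteen_pow_div hM hMi) hM
          (fun q _ hq => by simpa using hq) (by simp_all))
    _ ≤ C * (32 * 16 ^ i / M) * (M / M.totient / i) ^ 1 := by
        gcongr
        exact cast_sixteen_pow_div_le hM hMi
    _ = 32 * C * 16 ^ i / (M.totient * i) := by field_simp

end PrimeBlocks

section DoubleGains

open Finset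

/-- Multiplying `n` by `v` creates at least two elements of `D` of the form `g * v` with `g ∣ n`. -/
def IsDoubleGain (D : Set ℕ) (n v : ℕ) : Prop :=
  ∃ p ∈ n.divisors.offDiag, p.1 * v ∈ D ∧ p.2 * v ∈ D

lemma exists_card_prime_mul_add_one_le_sqrt {κ : ℕ} (hκ : κ ≠ 0) : ∃ C : ℝ, 0 < C ∧
    ∀ {s : Finset ℕ} {i j N : ℕ}, #s = κ → (∀ a ∈ s, a ≠ 0) → (∀ a ∈ s, a ≤ 2 ^ j) → i ≠ 0 →
      j ≠ 0 → 2 ^ i ≤ N →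
      (#{v ∈ range N | 2 ^ i < v ∧ ∀ a ∈ s, (a * v + 1).Prime} : ℝ) ≤ C * N * √j / i ^ κ := by
  obtain ⟨C, hC, hcard⟩ := exists_card_prime_mul_add_one_le κ
  obtain ⟨B, hB, htot⟩ := exists_div_totient_pow_le (k := κ * 2) (by positivity)
  refine ⟨C * √(B * (κ ^ 2 + 1)), by positivity, fun {s i j N} hs hs₀ hsj hi hj hN => ?_⟩
  set E := formsDiscriminant s
  have hE : E ≠ 0 := formsDiscriminant_ne_zero hs₀
  have hlog : Nat.log 2 E ≤ j * κ ^ 2 := by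
    refine (Nat.log_mono_right (formsDiscriminant_le_pow hsj)).trans_eq ?_
    rw [← pow_mul, Nat.log_pow one_lt_two, hs]
  have hEtot : ((E : ℝ) / E.totient) ^ κ ≤ √(B * (κ ^ 2 + 1)) * √j := by
    rw [← sqrt_mul (by positivity)]
    refine le_sqrt_of_sq_le ?_
    calc (((E : ℝ) / E.totient) ^ κ) ^ 2 ≤ B * (Nat.log 2 E + 1) := by
          rw [← pow_mul]
          exact htot E hE
      _ ≤ B * (j * κ ^ 2 + j) := by
          gcongr
          · exact_mod_cast hlog
          · exact_mod_cast hj.bot_lt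
      _ = B * (κ ^ 2 + 1) * j := by ring
  calc (#{v ∈ range N | 2 ^ i < v ∧ ∀ a ∈ s, (a * v + 1).Prime} : ℝ)
      ≤ C * N * (E / E.totient / i) ^ κ := hcard hs hs₀ hi hN
    _ = C * N * (E / E.totient) ^ κ / i ^ κ := by rw [div_pow _ (i : ℝ), mul_div_assoc]
    _ ≤ C * N * (√(B * (κ ^ 2 + 1)) * √j) / i ^ κ := by gcongr
    _ = _ := by ring

open Classical in
lemma card_isDoubleGain_le_sum (s : Finset ℕ) (D : Set ℕ) (n : ℕ) :
    #{v ∈ s | IsDoubleGain D n v} ≤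
      ∑ p ∈ n.divisors.offDiag, #{v ∈ s | p.1 * v ∈ D ∧ p.2 * v ∈ D} := by
  refine (card_le_card fun v hv => ?_).trans card_biUnion_le
  obtain ⟨hv, p, hp, hpv⟩ := mem_filter.1 hv
  exact mem_biUnion.2 ⟨p, hp, mem_filter.2 ⟨hv, hpv⟩⟩

open Classical in
lemma exists_card_isDoubleGain_shiftedPrimes_le (n : ℕ) : ∃ C : ℝ, 0 ≤ C ∧ ∀ {i N : ℕ}, i ≠ 0 →
    2 ^ i ≤ N →
    (#{v ∈ range N | 2 ^ i < v ∧ IsDoubleGain shiftedPrimes n v} : ℝ) ≤ C * N / i ^ 2 := by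
  obtain ⟨C, hC, hcard⟩ := exists_card_prime_mul_add_one_le_sqrt two_ne_zero
  refine ⟨#n.divisors.offDiag * (C * √n), by positivity, fun {i N} hi hN => ?_⟩
  have hpair : ∀ p ∈ n.divisors.offDiag, (#{v ∈ {v ∈ range N | 2 ^ i < v} |
      p.1 * v ∈ shiftedPrimes ∧ p.2 * v ∈ shiftedPrimes} : ℝ) ≤ C * N * √n / i ^ 2 := by
    intro p hp
    obtain ⟨h1, h2, hne⟩ := mem_offDiag.1 hp
    have hdvd : {p.1, p.2} ⊆ n.divisors := insert_subset h1 (singleton_subset_iff.2 h2)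
    rw [filter_filter]
    refine le_trans ?_ (hcard (card_pair hne)
      (fun a ha => (Nat.pos_of_mem_divisors (hdvd ha)).ne')
      (fun a ha => (Nat.divisor_le (hdvd ha)).trans Nat.lt_two_pow_self.le) hi
      (Nat.ne_zero_of_mem_divisors h1) hN)
    gcongr with v
    simp [shiftedPrimes]
  rw [← filter_filter]
  calc (#{v ∈ {v ∈ range N | 2 ^ i < v} | IsDoubleGain shiftedPrimes n v} : ℝ)
      ≤ ∑ p ∈ n.divisors.offDiag, (#{v ∈ {v ∈ range N | 2 ^ i < v} |
          p.1 * v ∈ shiftedPrimes ∧ p.2 * v ∈ shiftedPrimes} : ℝ) := by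
        exact_mod_cast card_isDoubleGain_le_sum _ _ n
    _ ≤ #n.divisors.offDiag • (C * N * √n / i ^ 2) := sum_le_card_nsmul _ _ _ hpair
    _ = _ := by
        rw [nsmul_eq_mul]
        ring

lemma exists_inv_totient_le : ∃ C : ℝ, 0 < C ∧ ∀ {i v : ℕ}, v ∈ Ico (2 ^ i) (2 ^ (i + 1)) →
    (v.totient : ℝ)⁻¹ ≤ C * √(i + 1) / 2 ^ i := by
  obtain ⟨C, hC, htot⟩ := exists_div_totient_pow_le two_ne_zero
  refine ⟨√C, by positivity, fun {i v} hv => ?_⟩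
  obtain ⟨hlow, hup⟩ := mem_Ico.1 hv
  have hv : v ≠ 0 := (Nat.two_pow_pos i |>.trans_le hlow).ne'
  have hratio : (v : ℝ) / v.totient ≤ √C * √(i + 1) := by
    rw [← sqrt_mul hC.le]
    refine le_sqrt_of_sq_le ((htot v hv).trans ?_)
    gcongr
    exact_mod_cast Nat.lt_succ_iff.1 (Nat.log_lt_of_lt_pow hv hup)
  calc (v.totient : ℝ)⁻¹ = v / v.totient / v := by rw [div_div_cancel_left' (by exact_mod_cast hv)]
    _ ≤ √C * √(i + 1) / v := by gcongr
    _ ≤ _ := by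
        gcongr
        exact_mod_cast hlow

lemma summable_sqrt_div_sq : Summable fun i : ℕ => √i / (i : ℝ) ^ 2 := by
  refine (summable_one_div_nat_rpow.2 (show (1 : ℝ) < 3 / 2 by norm_num)).congr fun i => ?_
  rcases i.eq_zero_or_pos with rfl | hi
  · simp [show (3 / 2 : ℝ) ≠ 0 by norm_num]
  · have hi : (0 : ℝ) < i := by exact_mod_cast hi
    rw [sqrt_eq_rpow, ← rpow_natCast, ← rpow_sub hi, one_div, ← rpow_neg hi.le]
    norm_num

open Classical in
lemma summable_inv_totient_isDoubleGain (n : ℕ) :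
    Summable fun v : ℕ => if IsDoubleGain shiftedPrimes n v then (v.totient : ℝ)⁻¹ else 0 := by
  obtain ⟨B, hB, hinv⟩ := exists_inv_totient_le
  obtain ⟨C, hC, hcard⟩ := exists_card_isDoubleGain_shiftedPrimes_le n
  have hnonneg : ∀ v : ℕ,
      0 ≤ if IsDoubleGain shiftedPrimes n v then (v.totient : ℝ)⁻¹ else 0 := fun v => by positivity
  refine summable_of_summable_sum_Ico_pow hnonneg one_lt_two ((summable_nat_add_iff 1).1 ?_)
  refine Summable.of_norm_bounded_eventually_nat (summable_sqrt_div_sq.mul_left (4 * B * C)) ?_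
  filter_upwards [eventually_ge_atTop 1] with i hi
  rw [norm_of_nonneg (sum_nonneg fun v _ => hnonneg v), ← sum_filter]
  have hsub : {v ∈ Ico (2 ^ (i + 1)) (2 ^ (i + 2)) | IsDoubleGain shiftedPrimes n v} ⊆
      {v ∈ range (2 ^ (i + 2)) | 2 ^ i < v ∧ IsDoubleGain shiftedPrimes n v} := fun v hv => by
    obtain ⟨hv, hgain⟩ := mem_filter.1 hv
    obtain ⟨hlow, hup⟩ := mem_Ico.1 hv
    exact mem_filter.2 ⟨mem_range.2 hup,
      (Nat.pow_lt_pow_right one_lt_two i.lt_succ_self).trans_le hlow, hgain⟩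
  calc ∑ v ∈ Ico (2 ^ (i + 1)) (2 ^ (i + 2)) with IsDoubleGain shiftedPrimes n v,
        (v.totient : ℝ)⁻¹
      ≤ #{v ∈ Ico (2 ^ (i + 1)) (2 ^ (i + 2)) | IsDoubleGain shiftedPrimes n v} •
          (B * √((i + 1 : ℕ) + 1) / 2 ^ (i + 1)) :=
        sum_le_card_nsmul _ _ _ fun v hv => hinv (mem_filter.1 hv).1
    _ ≤ C * (2 ^ (i + 2) : ℕ) / i ^ 2 * (B * √(4 * i) / 2 ^ (i + 1)) := by
        rw [nsmul_eq_mul]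
        gcongr
        · exact le_trans (by exact_mod_cast card_le_card hsub)
            (hcard (Nat.ne_of_gt hi) (Nat.pow_le_pow_right two_pos (by lia)))
        · push_cast
          have : (1 : ℝ) ≤ i := by exact_mod_cast hi
          linarith
    _ = 4 * B * C * (√i / i ^ 2) := by
        rw [sqrt_mul (by norm_num), show (4 : ℝ) = 2 ^ 2 by norm_num, sqrt_sq zero_le_two]
        push_cast
        field_simp
        ring

lemma exists_card_prime_triple_le : ∃ C : ℝ, 0 < C ∧ ∀ {n i l : ℕ} {p : ℕ × ℕ},
    p ∈ n.divisors.offDiag → i ≠ 0 → n ≤ 2 ^ i → 2 ≤ l → l ≤ 8 ^ i →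
      (#{v ∈ range (16 ^ (i + 1) / l + 1) | 2 ^ i < v ∧ (n * l * v + 1).Prime ∧
        (p.1 * v + 1).Prime ∧ (p.2 * v + 1).Prime} : ℝ) ≤ C * 16 ^ i * √i / i ^ 3 * (l : ℝ)⁻¹ := by
  obtain ⟨C, hC, hcard⟩ := exists_card_prime_mul_add_one_le_sqrt three_ne_zero
  refine ⟨64 * C, by positivity, fun {n i l p} hp hi hni hl hli => ?_⟩
  have hl₀ : l ≠ 0 := by lia
  obtain ⟨h1, h2, hne⟩ := mem_offDiag.1 hp
  have hn : n ≠ 0 := Nat.ne_zero_of_mem_divisors h1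
  have hdvd : {p.1, p.2} ⊆ n.divisors := insert_subset h1 (singleton_subset_iff.2 h2)
  have hnl : n < n * l := lt_mul_of_one_lt_right hn.bot_lt hl
  have hnl' : n * l ≤ 2 ^ (4 * i) := by
    calc n * l ≤ 2 ^ i * 8 ^ i := Nat.mul_le_mul hni hli
      _ = 2 ^ (4 * i) := by rw [← mul_pow, pow_mul]; rfl
  have hnotMem : n * l ∉ ({p.1, p.2} : Finset ℕ) :=
    fun h => hnl.not_ge (Nat.divisor_le (hdvd h))
  have hT : ∀ a ∈ insert (n * l) ({p.1, p.2} : Finset ℕ), a ≠ 0 ∧ a ≤ 2 ^ (4 * i) := by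
    intro a ha
    rcases mem_insert.1 ha with rfl | ha
    · exact ⟨by positivity, hnl'⟩
    · exact ⟨(Nat.pos_of_mem_divisors (hdvd ha)).ne',
        (Nat.divisor_le (hdvd ha)).trans (hnl.le.trans hnl')⟩
  calc _ ≤ C * (16 ^ (i + 1) / l + 1 : ℕ) * √(4 * i : ℕ) / i ^ 3 := by
        refine le_trans (le_of_eq ?_) (hcard (by rw [card_insert_of_notMem hnotMem, card_pair hne])
          (fun a ha => (hT a ha).1) (fun a ha => (hT a ha).2) hi (by positivity)
          (two_pow_le_sixteen_pow_div hl₀ hli))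
        simp
    _ ≤ C * (32 * 16 ^ i / l) * √(4 * i : ℕ) / i ^ 3 := by
        gcongr
        exact cast_sixteen_pow_div_le hl₀ hli
    _ = _ := by
        rw [Nat.cast_mul, sqrt_mul (by positivity), show ((4 : ℕ) : ℝ) = 2 ^ 2 by norm_num,
          sqrt_sq zero_le_two]
        ring

open Classical in
lemma exists_card_mul_prime_isDoubleGain_le (n : ℕ) : ∃ C : ℝ, 0 ≤ C ∧
    ∀ {i l : ℕ}, i ≠ 0 → n ≤ 2 ^ i → 2 ≤ l → l ≤ 8 ^ i →
      (#{v ∈ range (16 ^ (i + 1) / l + 1) | 2 ^ i < v ∧ (n * l * v + 1).Prime ∧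
        IsDoubleGain shiftedPrimes n v} : ℝ) ≤ C * 16 ^ i * √i / i ^ 3 * (l : ℝ)⁻¹ := by
  obtain ⟨C, hC, hcard⟩ := exists_card_prime_triple_le
  refine ⟨#n.divisors.offDiag * C, by positivity, fun {i l} hi hni hl hli => ?_⟩
  set N := 16 ^ (i + 1) / l + 1
  have hpair : ∀ p ∈ n.divisors.offDiag,
      (#{v ∈ {v ∈ range N | 2 ^ i < v ∧ (n * l * v + 1).Prime} |
        p.1 * v ∈ shiftedPrimes ∧ p.2 * v ∈ shiftedPrimes} : ℝ) ≤
      C * 16 ^ i * √i / i ^ 3 * (l : ℝ)⁻¹ := by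
    intro p hp
    rw [filter_filter]
    exact (Nat.mono_cast (card_le_card (monotone_filter_right _
      fun v _ ⟨⟨hv, hprime⟩, h⟩ => ⟨hv, hprime, h⟩))).trans (hcard hp hi hni hl hli)
  simp only [← and_assoc]
  rw [← filter_filter]
  calc _ ≤ ∑ p ∈ n.divisors.offDiag,
          (#{v ∈ {v ∈ range N | 2 ^ i < v ∧ (n * l * v + 1).Prime} |
            p.1 * v ∈ shiftedPrimes ∧ p.2 * v ∈ shiftedPrimes} : ℝ) := by
        exact_mod_cast card_isDoubleGain_le_sum _ _ n
    _ ≤ #n.divisors.offDiag • (C * 16 ^ i * √i / i ^ 3 * (l : ℝ)⁻¹) :=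
        sum_le_card_nsmul _ _ _ hpair
    _ = _ := by
        rw [nsmul_eq_mul]
        ring

lemma sum_Ioc_inv_le_four_mul {i : ℕ} (hi : i ≠ 0) :
    ∑ l ∈ Ioc 1 (8 ^ i), ((l : ℕ) : ℝ)⁻¹ ≤ 4 * i := by
  have hi' : (1 : ℝ) ≤ i := by exact_mod_cast hi.bot_lt
  have hharm : (harmonic (8 ^ i) : ℝ) = ∑ l ∈ Icc 1 (8 ^ i), ((l : ℕ) : ℝ)⁻¹ := by
    rw [harmonic_eq_sum_Icc]
    push_cast
    rfl
  calc ∑ l ∈ Ioc 1 (8 ^ i), ((l : ℕ) : ℝ)⁻¹ ≤ harmonic (8 ^ i) := by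
        rw [hharm]
        exact sum_le_sum_of_subset_of_nonneg Ioc_subset_Icc_self fun l _ _ => by positivity
    _ ≤ 1 + log (8 ^ i : ℕ) := harmonic_le_one_add_log _
    _ = 1 + i * (3 * log 2) := by
        rw [Nat.cast_pow, log_pow, show ((8 : ℕ) : ℝ) = 2 ^ 3 by norm_num, log_pow]
        norm_num
    _ ≤ 4 * i := by nlinarith [log_two_lt_d9]

open Classical in
lemma card_exists_isDoubleGain_dvd_le (n i : ℕ) :
    #{m ∈ range (16 ^ (i + 1)) | (n * m + 1).Prime ∧
      ∃ v, 2 ^ (i + 4) ≤ v ∧ v ∣ m ∧ IsDoubleGain shiftedPrimes n v} ≤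
    ∑ l ∈ Icc 1 (8 ^ i), #{v ∈ range (16 ^ (i + 1) / l + 1) | 2 ^ i < v ∧
      (n * l * v + 1).Prime ∧ IsDoubleGain shiftedPrimes n v} := by
  refine (card_le_card (t := (Icc 1 (8 ^ i)).biUnion fun l => image (l * ·) _) ?_).trans
    (card_biUnion_le.trans (sum_le_sum fun l _ => card_image_le))
  intro m hm
  obtain ⟨hm, hprime, v, hv, ⟨l, rfl⟩, hgain⟩ := mem_filter.1 hm
  have hvl : v * l < 16 ^ (i + 1) := mem_range.1 hm
  have hl : 0 < l := Nat.pos_of_ne_zero fun h => by simp [h, Nat.not_prime_one] at hprime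
  have hl8 : l < 8 ^ i := by
    refine lt_of_mul_lt_mul_left ?_ (2 ^ (i + 4)).zero_le
    calc 2 ^ (i + 4) * l ≤ v * l := Nat.mul_le_mul_right l hv
      _ < 16 ^ (i + 1) := hvl
      _ = 2 ^ (i + 4) * 8 ^ i := by
          rw [pow_succ, pow_add, show 16 = 2 * 8 by rfl, mul_pow]
          ring
  refine mem_biUnion.2 ⟨l, mem_Icc.2 ⟨hl, hl8.le⟩, mem_image.2 ⟨v, mem_filter.2 ⟨?_, ?_, ?_, hgain⟩,
    mul_comm l v⟩⟩
  · exact mem_range.2 (Nat.lt_succ_of_le ((Nat.le_div_iff_mul_le hl).2 hvl.le))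
  · exact (Nat.pow_lt_pow_right one_lt_two (by lia)).trans_le hv
  · rwa [mul_assoc, mul_comm l]

open Classical in
lemma exists_card_exists_isDoubleGain_dvd_le (n : ℕ) : ∃ C : ℝ, 0 ≤ C ∧ ∀ {i : ℕ},
    i ≠ 0 → n ≤ 2 ^ i →
    (#{m ∈ range (16 ^ (i + 1)) | (n * m + 1).Prime ∧
      ∃ v, 2 ^ (i + 4) ≤ v ∧ v ∣ m ∧ IsDoubleGain shiftedPrimes n v} : ℝ) ≤
    C * 16 ^ i * √i / i ^ 2 := by
  obtain ⟨C₁, hC₁, hone⟩ := exists_card_isDoubleGain_shiftedPrimes_le n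
  obtain ⟨C₂, hC₂, hmul⟩ := exists_card_mul_prime_isDoubleGain_le n
  refine ⟨32 * C₁ + 4 * C₂, by positivity, fun {i} hi hni => ?_⟩
  have hi' : (1 : ℝ) ≤ i := by exact_mod_cast hi.bot_lt
  have h8 : 1 ≤ 8 ^ i := Nat.one_le_pow _ _ (by norm_num)
  set F : ℕ → Finset ℕ := fun l => {v ∈ range (16 ^ (i + 1) / l + 1) | 2 ^ i < v ∧
      (n * l * v + 1).Prime ∧ IsDoubleGain shiftedPrimes n v}
  have hF1 : (#(F 1) : ℝ) ≤ 32 * C₁ * 16 ^ i * √i / i ^ 2 := by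
    calc (#(F 1) : ℝ) ≤ C₁ * (16 ^ (i + 1) / 1 + 1 : ℕ) / i ^ 2 := by
          refine le_trans ?_ (hone hi (two_pow_le_sixteen_pow_div one_ne_zero h8))
          exact Nat.mono_cast (card_le_card
            (monotone_filter_right _ fun v _ => And.imp_right And.right))
      _ ≤ C₁ * (32 * 16 ^ i / (1 : ℕ)) / i ^ 2 := by
          gcongr
          exact cast_sixteen_pow_div_le one_ne_zero h8
      _ = 32 * C₁ * 16 ^ i * 1 / i ^ 2 := by
          push_cast
          ring
      _ ≤ 32 * C₁ * 16 ^ i * √i / i ^ 2 := by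
          gcongr
          exact one_le_sqrt.2 hi'
  calc _ ≤ ((∑ l ∈ Icc 1 (8 ^ i), #(F l) : ℕ) : ℝ) := by
        exact_mod_cast card_exists_isDoubleGain_dvd_le n i
    _ = #(F 1) + ∑ l ∈ Ioc 1 (8 ^ i), (#(F l) : ℝ) := by
        rw [Nat.cast_sum, ← add_sum_Ioc_eq_sum_Icc h8]
    _ ≤ 32 * C₁ * 16 ^ i * √i / i ^ 2 + C₂ * 16 ^ i * √i / i ^ 3 * (4 * i) := by
        gcongr
        refine (sum_le_sum fun l hl => hmul hi hni (mem_Ioc.1 hl).1 (mem_Ioc.1 hl).2).trans ?_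
        rw [← mul_sum]
        gcongr
        exact sum_Ioc_inv_le_four_mul hi
    _ = _ := by field_simp

end DoubleGains

section LevelSets

open Finset

lemma exists_residueClass_coprime {n P : ℕ} (h2 : 2 ∣ n) (hnP : n.Coprime P) (hn : n ≠ 0) :
    ∃ c : ℕ, c.Coprime (n ^ 2 * P) ∧
      ∀ p ≠ 0, p ≡ c [MOD n ^ 2 * P] → ∃ m, p = n * m + 1 ∧ m.Coprime (n ^ 2 * P) := by
  obtain ⟨c, hcn, hcP⟩ := Nat.chineseRemainder (hnP.pow_left 2) (n + 1) 2
  refine ⟨c, Nat.Coprime.mul_right ?_ ?_, fun p hp hpc => ?_⟩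
  · refine (hcn.gcd_eq).trans (Nat.Coprime.pow_right 2 ?_)
    simp
  · exact hcP.gcd_eq.trans (hnP.coprime_dvd_left h2)
  have hpn : p ≡ n + 1 [MOD n ^ 2] := (hpc.of_mul_right P).trans hcn
  have hpP : p ≡ 2 [MOD P] := (hpc.of_mul_left (n ^ 2)).trans hcP
  have hp1 : 1 ≡ p [MOD n] := by
    simpa using (hpn.of_dvd (dvd_pow_self n two_ne_zero)).symm
  obtain ⟨m, hm⟩ := (Nat.modEq_iff_dvd' (Nat.one_le_iff_ne_zero.2 hp)).1 hp1
  obtain rfl : p = n * m + 1 := by lia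
  have hmn : m ≡ 1 [MOD n] := by
    refine Nat.ModEq.mul_left_cancel' hn ?_
    rw [mul_one, ← sq]
    exact hpn.add_right_cancel' 1
  have hmP : n * m ≡ 1 [MOD P] := hpP.add_right_cancel' 1
  have hmP' : (n * m).Coprime P := hmP.gcd_eq.trans (Nat.gcd_one_left P)
  exact ⟨m, rfl, (Nat.Coprime.pow_right 2 (hmn.gcd_eq.trans (Nat.gcd_one_left n))).mul_right
    hmP'.coprime_mul_left⟩

lemma exists_residueClass_coprime_primesLE {n : ℕ} (h2 : 2 ∣ n) (hn : n ≠ 0) (Y : ℕ) :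
    ∃ M c : ℕ, M ≠ 0 ∧ c.Coprime M ∧ (∀ q ∈ Y.primesLE, q ∣ M) ∧
      ∀ p ≠ 0, p ≡ c [MOD M] → ∃ m, p = n * m + 1 ∧ m.Coprime M := by
  set P := ∏ q ∈ Y.primesLE with ¬q ∣ n, q
  have hnP : n.Coprime P := Nat.Coprime.prod_right fun q hq =>
    (((Nat.prime_of_mem_primesLE (mem_filter.1 hq).1).coprime_iff_not_dvd).2
      (mem_filter.1 hq).2).symm
  have hP : P ≠ 0 :=
    prod_ne_zero_iff.2 fun q hq => (Nat.prime_of_mem_primesLE (mem_filter.1 hq).1).ne_zero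
  obtain ⟨c, hc, hclass⟩ := exists_residueClass_coprime h2 hnP hn
  refine ⟨n ^ 2 * P, c, by positivity, hc, fun q hq => ?_, hclass⟩
  by_cases hqn : q ∣ n
  · exact (dvd_pow hqn two_ne_zero).mul_right P
  · exact (dvd_prod_of_mem id (mem_filter.2 ⟨hq, hqn⟩)).mul_left _

lemma exists_card_primeBlock_modEq_le : ∃ C : ℝ, 0 < C ∧ ∀ {M v i : ℕ} (c d : ℕ), M ≠ 0 → v ≠ 0 →
    M.Coprime v → i ≠ 0 → M * v ≤ 8 ^ i →
    (#{p ∈ primeBlock M c i | p ≡ d [MOD v]} : ℝ) ≤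
      C * 16 ^ i / (M.totient * i) * (v.totient : ℝ)⁻¹ := by
  obtain ⟨C, hC, hcard⟩ := exists_card_primeBlock_le
  refine ⟨C, hC, fun {M v i} c d hM hv hMv hi hle => ?_⟩
  obtain ⟨r, hrM, hrv⟩ := Nat.chineseRemainder hMv c d
  have hsub : {p ∈ primeBlock M c i | p ≡ d [MOD v]} ⊆ primeBlock (M * v) r i := fun p hp => by
    obtain ⟨hp, hpd⟩ := mem_filter.1 hp
    obtain ⟨hpi, hprime, hpc⟩ := mem_filter.1 hp
    exact mem_filter.2 ⟨hpi, hprime, (Nat.modEq_and_modEq_iff_modEq_mul hMv).1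
      ⟨hpc.trans hrM.symm, hpd.trans hrv.symm⟩⟩
  calc (#{p ∈ primeBlock M c i | p ≡ d [MOD v]} : ℝ) ≤ #(primeBlock (M * v) r i) := by
        exact_mod_cast card_le_card hsub
    _ ≤ C * 16 ^ i / ((M * v).totient * i) := hcard r (mul_ne_zero hM hv) hi hle
    _ = _ := by
        rw [Nat.totient_mul hMv, Nat.cast_mul, mul_right_comm, ← div_div, div_eq_mul_inv (_ / _)]

lemma exists_sum_inv_totient_isDoubleGain_lt (n : ℕ) {ε : ℝ} (hε : 0 < ε) :
    ∃ Y : ℕ, ∀ t : Finset ℕ, (∀ v ∈ t, Y < v ∧ IsDoubleGain shiftedPrimes n v) →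
      ∑ v ∈ t, (v.totient : ℝ)⁻¹ < ε := by
  classical
  obtain ⟨s, hs⟩ := summable_iff_vanishing_norm.1 (summable_inv_totient_isDoubleGain n) ε hε
  refine ⟨s.sup id, fun t ht => ?_⟩
  have hdisj : Disjoint t s := disjoint_left.2 fun v hvt hvs =>
    (ht v hvt).1.not_ge (le_sup (f := id) hvs)
  refine (le_abs_self _).trans_lt ?_
  rw [← sum_congr rfl fun v hv => if_pos (ht v hv).2]
  exact hs t hdisj

open Classical in
lemma card_primeBlock_le_of_isDoubleGain {D : Set ℕ} {n M c Y i : ℕ}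
    (hclass : ∀ p ≠ 0, p ≡ c [MOD M] → ∃ m, p = n * m + 1 ∧ m.Coprime M)
    (hY : ∀ q ∈ Y.primesLE, q ∣ M) (hi : n + 1 < 16 ^ i)
    (hgain : ∀ m > 1, (n * m + 1).Prime → ∃ v, v ∣ m ∧ v ≠ 1 ∧ IsDoubleGain D n v) :
    #(primeBlock M c i) ≤
      ∑ v ∈ Ioo Y (2 ^ (i + 4)) with M.Coprime v ∧ IsDoubleGain D n v,
        #{p ∈ primeBlock M c i | p ≡ 1 [MOD v]} +
      #{m ∈ range (16 ^ (i + 1)) | (n * m + 1).Prime ∧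
        ∃ v, 2 ^ (i + 4) ≤ v ∧ v ∣ m ∧ IsDoubleGain D n v} := by
  refine (card_le_card (t := Finset.biUnion _ _ ∪ image (n * · + 1) _) ?_).trans
    ((card_union_le _ _).trans (Nat.add_le_add card_biUnion_le card_image_le))
  intro p hp
  obtain ⟨hpi, hprime, hpc⟩ := mem_filter.1 hp
  obtain ⟨hlow, hup⟩ := mem_Ico.1 hpi
  obtain ⟨m, rfl, hmM⟩ := hclass p hprime.ne_zero hpc
  have hm : 1 < m := by
    by_contra! hm
    have := Nat.mul_le_mul_left n hm
    lia
  obtain ⟨v, hvm, hv1, hv⟩ := hgain m hm hprime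
  rcases lt_or_ge v (2 ^ (i + 4)) with hvi | hvi
  · have hYv : Y < v := by
      by_contra! hvY
      have hq := v.minFac_prime hv1
      have hqY : v.minFac ∈ Y.primesLE := Nat.mem_primesLE.2
        ⟨(Nat.minFac_le (Nat.pos_of_dvd_of_pos hvm (by lia))).trans hvY, hq⟩
      exact hq.not_dvd_one
        (hmM ▸ Nat.dvd_gcd (v.minFac_dvd.trans hvm) (hY _ hqY))
    refine mem_union_left _ (mem_biUnion.2 ⟨v, mem_filter.2 ⟨mem_Ioo.2 ⟨hYv, hvi⟩,
      (hmM.coprime_dvd_left hvm).symm, hv⟩, mem_filter.2 ⟨hp, ?_⟩⟩)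
    exact (Nat.modEq_zero_iff_dvd.2 (hvm.mul_left n)).add_right 1
  · have hn : 0 < n := by
      by_contra! hn
      simp_all [Nat.not_prime_one]
    have := Nat.le_mul_of_pos_left m hn
    exact mem_union_right _ (mem_image_of_mem _
      (mem_filter.2 ⟨mem_range.2 (by lia), hprime, v, hvi, hvm, hv⟩))

lemma eventually_mul_two_pow_le_eight_pow (M : ℕ) :
    ∀ᶠ i : ℕ in atTop, M * 2 ^ (i + 4) ≤ 8 ^ i := by
  filter_upwards [(tendsto_pow_atTop_atTop_of_one_lt (by norm_num : 1 < 4)).eventually_ge_atTop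
    (M * 16)] with i hi
  calc M * 2 ^ (i + 4) = M * 16 * 2 ^ i := by ring
    _ ≤ 4 ^ i * 2 ^ i := by gcongr
    _ = 8 ^ i := (mul_pow 4 2 i).symm

lemma eventually_mul_sqrt_div_sq_le (C : ℝ) {q ε : ℝ} (hq : 0 < q) (hε : 0 < ε) :
    ∀ᶠ i : ℕ in atTop, C * 16 ^ i * √i / i ^ 2 ≤ ε * (16 ^ i / (q * i)) := by
  have hlim : Tendsto (fun i : ℕ => C * q / √i) atTop (nhds 0) :=
    (tendsto_sqrt_atTop.comp tendsto_natCast_atTop_atTop).const_div_atTop _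
  filter_upwards [eventually_ne_atTop 0, hlim.eventually_le_const hε] with i hi hsmall
  have hi' : 0 < (i : ℝ) := by positivity
  calc _ = C * q / √i * (16 ^ i / (q * i)) := by
        field_simp
        rw [sq_sqrt hi'.le]
    _ ≤ _ := by gcongr

lemma exists_eventually_card_primeBlock_le {n : ℕ} (hn : n ≠ 0) (h2 : 2 ∣ n)
    (hgain : ∀ m > 1, (n * m + 1).Prime → ∃ v, v ∣ m ∧ v ≠ 1 ∧ IsDoubleGain shiftedPrimes n v)
    {ε : ℝ} (hε : 0 < ε) :
    ∃ M c : ℕ, M ≠ 0 ∧ c.Coprime M ∧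
      ∀ᶠ i in atTop, (#(primeBlock M c i) : ℝ) ≤ ε * (16 ^ i / (M.totient * i)) := by
  classical
  obtain ⟨C₁, hC₁, hmodEq⟩ := exists_card_primeBlock_modEq_le
  obtain ⟨C₂, -, hlarge⟩ := exists_card_exists_isDoubleGain_dvd_le n
  obtain ⟨Y, hY⟩ := exists_sum_inv_totient_isDoubleGain_lt n (div_pos hε (mul_pos two_pos hC₁))
  obtain ⟨M, c, hM, hc, hYM, hclass⟩ := exists_residueClass_coprime_primesLE h2 hn Y
  have hφ : 0 < (M.totient : ℝ) := by exact_mod_cast Nat.totient_pos.2 (Nat.pos_of_ne_zero hM)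
  refine ⟨M, c, hM, hc, ?_⟩
  filter_upwards [eventually_ne_atTop 0, eventually_mul_two_pow_le_eight_pow M,
    (tendsto_pow_atTop_atTop_of_one_lt (one_lt_two (α := ℕ))).eventually_ge_atTop n,
    (tendsto_pow_atTop_atTop_of_one_lt (by norm_num : 1 < 16)).eventually_gt_atTop (n + 1),
    eventually_mul_sqrt_div_sq_le C₂ hφ (half_pos hε)] with i hi hMi hn2 hn16 htail
  set s := {v ∈ Ioo Y (2 ^ (i + 4)) | M.Coprime v ∧ IsDoubleGain shiftedPrimes n v} with hs
  have hsum : ∑ v ∈ s, (#{p ∈ primeBlock M c i | p ≡ 1 [MOD v]} : ℝ) ≤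
      ε / 2 * (16 ^ i / (M.totient * i)) := by
    have hv : ∀ v ∈ s, (Y < v ∧ v < 2 ^ (i + 4)) ∧ M.Coprime v ∧ IsDoubleGain shiftedPrimes n v :=
      fun v hv => by rwa [hs, mem_filter, mem_Ioo] at hv
    calc _ ≤ ∑ v ∈ s, C₁ * 16 ^ i / (M.totient * i) * (v.totient : ℝ)⁻¹ :=
          sum_le_sum fun v hvs => hmodEq c 1 hM (hv v hvs).1.1.ne_bot (hv v hvs).2.1 hi
            ((Nat.mul_le_mul_left M (hv v hvs).1.2.le).trans hMi)
      _ ≤ C₁ * 16 ^ i / (M.totient * i) * (ε / (2 * C₁)) := by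
          rw [← mul_sum]
          gcongr
          exact (hY s fun v hvs => ⟨(hv v hvs).1.1, (hv v hvs).2.2⟩).le
      _ = _ := by field_simp
  refine (Nat.cast_le.2 (card_primeBlock_le_of_isDoubleGain hclass hYM hn16 hgain)).trans ?_
  rw [← add_halves ε, add_mul, Nat.cast_add, Nat.cast_sum]
  refine add_le_add hsum (le_trans ?_ htail)
  convert hlarge hi hn2

lemma exists_prime_mul_add_one_forall_not_isDoubleGain {n : ℕ} (hn : n ≠ 0) (h2 : 2 ∣ n) :
    ∃ m > 1, (n * m + 1).Prime ∧ ∀ v, v ∣ m → v ≠ 1 → ¬IsDoubleGain shiftedPrimes n v := by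
  by_contra! hgain
  obtain ⟨M, c, hM, hc, hupper⟩ :=
    exists_eventually_card_primeBlock_le hn h2 hgain (ε := 1 / 8) (by norm_num)
  obtain ⟨i, hlower, hupper, hi⟩ := ((frequently_le_card_primeBlock hM hc).and_eventually
    (hupper.and (eventually_ge_atTop 1))).exists
  have hφ : 0 < (M.totient : ℝ) := by exact_mod_cast Nat.totient_pos.2 (Nat.pos_of_ne_zero hM)
  have hi' : 1 ≤ (i : ℝ) := by exact_mod_cast hi
  have hle := hlower.trans hupper
  rw [one_div_mul_eq_div, div_div, div_le_div_iff_of_pos_left (by positivity) (by positivity)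
    (by positivity)] at hle
  nlinarith

lemma exists_eq_mul_of_forall_dvd_mul {n v a : ℕ} (hn : n ≠ 0) (hav : a ∣ n * v)
    (hmin : ∀ w, w ∣ v → a ∣ n * w → w = v) : ∃ g ∈ n.divisors, a = g * v := by
  have hn' := Nat.pos_of_ne_zero hn
  have hw : a / a.gcd n = v :=
    hmin _ ((div_gcd_dvd_iff hn').2 hav) ((div_gcd_dvd_iff hn').1 dvd_rfl)
  exact ⟨a.gcd n, Nat.mem_divisors.2 ⟨a.gcd_dvd_right n, hn⟩,
    by rw [← hw, Nat.mul_div_cancel' (a.gcd_dvd_left n)]⟩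

lemma cardDivisorsIn_mul_eq_add_one {D : Set ℕ} {n v b : ℕ} (hn : n ≠ 0) (hv : v ≠ 0)
    (hbD : b ∈ D) (hbv : b ∣ n * v) (hbn : ¬b ∣ n)
    (huniq : ∀ d ∈ D, d ∣ n * v → ¬d ∣ n → d = b) :
    cardDivisorsIn D (n * v) = cardDivisorsIn D n + 1 := by
  classical
  have hdiv : {d ∈ (n * v).divisors | d ∈ D} = insert b {d ∈ n.divisors | d ∈ D} := by
    ext d
    simp only [mem_insert, mem_filter, Nat.mem_divisors]
    constructor
    · rintro ⟨⟨hdv, -⟩, hdD⟩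
      by_cases hdn : d ∣ n
      exacts [.inr ⟨⟨hdn, hn⟩, hdD⟩, .inl (huniq d hdD hdv hdn)]
    · rintro (rfl | ⟨⟨hdn, -⟩, hdD⟩)
      exacts [⟨⟨hbv, mul_ne_zero hn hv⟩, hbD⟩, ⟨⟨hdn.mul_right v, mul_ne_zero hn hv⟩, hdD⟩]
  have hnotin : b ∉ {d ∈ n.divisors | d ∈ D} := fun h =>
    hbn (Nat.dvd_of_mem_divisors (mem_filter.1 h).1)
  rw [cardDivisorsIn, cardDivisorsIn]
  convert card_insert_of_notMem hnotin

lemma exists_cardDivisorsIn_mul_eq_add_one {D : Set ℕ} {n m a : ℕ} (hn : n ≠ 0) (hm : m ≠ 0)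
    (haD : a ∈ D) (ham : a ∣ n * m) (han : ¬a ∣ n)
    (hgain : ∀ v, v ∣ m → v ≠ 1 → ¬IsDoubleGain D n v) :
    ∃ v, v ≠ 0 ∧ cardDivisorsIn D (n * v) = cardDivisorsIn D n + 1 := by
  classical
  let Gains (v : ℕ) : Prop := v ∣ m ∧ ∃ b ∈ D, b ∣ n * v ∧ ¬b ∣ n
  have hex : ∃ v, Gains v := ⟨m, dvd_rfl, a, haD, ham, han⟩
  obtain ⟨hvm, b, hbD, hbv, hbn⟩ : Gains (Nat.find hex) := Nat.find_spec hex
  set v := Nat.find hex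
  have hv0 : v ≠ 0 := ne_zero_of_dvd_ne_zero hm hvm
  have hv1 : v ≠ 1 := fun h => hbn (by rwa [h, mul_one] at hbv)
  have heq : ∀ d ∈ D, d ∣ n * v → ¬d ∣ n → ∃ g ∈ n.divisors, d = g * v := fun d hdD hdv hdn =>
    exists_eq_mul_of_forall_dvd_mul hn hdv fun w hwv hdw =>
      (Nat.le_of_dvd (Nat.pos_of_ne_zero hv0) hwv).antisymm
        (Nat.find_min' hex ⟨hwv.trans hvm, d, hdD, hdw, hdn⟩)
  obtain ⟨g, hg, rfl⟩ := heq b hbD hbv hbn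
  have huniq : ∀ d ∈ D, d ∣ n * v → ¬d ∣ n → d = g * v := fun d hdD hdv hdn => by
    obtain ⟨g', hg', rfl⟩ := heq d hdD hdv hdn
    by_contra hne
    exact hgain v hvm hv1
      ⟨(g', g), mem_offDiag.2 ⟨hg', hg, fun h => hne (congrArg (· * v) h)⟩, hdD, hbD⟩
  exact ⟨v, hv0, cardDivisorsIn_mul_eq_add_one hn hv0 hbD hbv hbn huniq⟩

lemma omegaStar_eq_cardDivisorsIn (n : ℕ) : omegaStar n = cardDivisorsIn shiftedPrimes n := by
  classical
  rw [omegaStar, cardDivisorsIn]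
  exact congrArg card (filter_congr fun _ _ => Iff.rfl)

lemma exists_omegaStar_eq_add_two (k : ℕ) : ∃ n, n ≠ 0 ∧ 2 ∣ n ∧ omegaStar n = k + 2 := by
  induction k with
  | zero => exact ⟨2, two_ne_zero, dvd_rfl, by decide⟩
  | succ k ih =>
    obtain ⟨n, hn, h2, hk⟩ := ih
    obtain ⟨m, hm, hprime, hgain⟩ := exists_prime_mul_add_one_forall_not_isDoubleGain hn h2
    have hlt : n < n * m := lt_mul_of_one_lt_right (Nat.pos_of_ne_zero hn) hm
    obtain ⟨v, hv, hcard⟩ := exists_cardDivisorsIn_mul_eq_add_one (D := shiftedPrimes) hn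
      (Nat.ne_zero_of_lt hm) (a := n * m) hprime dvd_rfl
      (Nat.not_dvd_of_pos_of_lt (Nat.pos_of_ne_zero hn) hlt) hgain
    refine ⟨n * v, mul_ne_zero hn hv, h2.mul_right v, ?_⟩
    rw [omegaStar_eq_cardDivisorsIn, hcard, ← omegaStar_eq_cardDivisorsIn, hk]

lemma exists_omegaStar_eq {k : ℕ} (hk : 0 < k) : ∃ n, n ≠ 0 ∧ omegaStar n = k := by
  obtain rfl | ⟨j, rfl⟩ : k = 1 ∨ ∃ j, k = j + 2 := by
    rcases k with _ | _ | j
    exacts [absurd hk (lt_irrefl 0), .inl rfl, .inr ⟨j, rfl⟩]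
  · exact ⟨1, one_ne_zero, by decide⟩
  · obtain ⟨n, hn, -, hnj⟩ := exists_omegaStar_eq_add_two j
    exact ⟨n, hn, hnj⟩

end LevelSets

theorem level_set_density (k : ℕ) (hk : 0 < k) :
    ∃ δ : ℝ, δ > 0 ∧
      Tendsto (fun x : ℝ =>
          (((Finset.Icc 1 ⌊x⌋₊).filter (fun n => omegaStar n = k)).card : ℝ) / x)
        atTop (nhds δ) := by
  obtain ⟨n, hn, rfl⟩ := exists_omegaStar_eq hk
  obtain ⟨δ, hδ, hdensity⟩ :=
    hasThinTails_shiftedPrimes.exists_pos_hasNatDensity_cardDivisorsIn_eq hn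
  refine ⟨δ, hδ, hdensity.tendsto_floor.congr fun x => ?_⟩
  simp only [countUpTo, Set.mem_ofPred_eq, ← omegaStar_eq_cardDivisorsIn]
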